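/- arXiv:1802.00299 — 2 statements merged into one kernel-verified Lean document; each statement's English description precedes it below -/
import Mathlib

section
/- Let D be a central division algebra of degree n = n₁n₂ over a field K with gcd(n₁, n₂) = 1, and suppose D = D₁ ⊗_K D₂ where Dᵢ is a central division K-algebra of degree nᵢ. If D' is a central division K-algebra of degree n having the same maximal subfields as D, then D' ≅ D'₁ ⊗_K D'₂ where each D'ᵢ is a central division K-algebra of degree nᵢ having the same maximal subfields as Dᵢ. -/
open TensorProduct
set_option maxHeartbeats 1000000

/-- Two `K`-algebras (of degree `n`, i.e. dimension `n²`) have the same maximal subfields: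
a field extension `P/K` of degree `n` embeds `K`-linearly into `A` iff it embeds into `B`. -/
def SameMaxSubfields (K : Type) [Field K] (n : ℕ) (A B : Type) [Ring A] [Ring B]
    [Algebra K A] [Algebra K B] : Prop :=
  ∀ (P : Type) [Field P] [Algebra K P], Module.finrank K P = n →
    (Nonempty (P →ₐ[K] A) ↔ Nonempty (P →ₐ[K] B))

/-- The subalgebra `A` is a division algebra: every nonzero element is two-sided invertible. -/
def IsDivisionSubalgebra {K B : Type} [Field K] [Ring B] [Algebra K B]
    (A : Subalgebra K B) : Prop :=
  ∀ x : ↥A, x ≠ 0 → ∃ y : ↥A, x * y = 1 ∧ y * x = 1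


namespace GPD

section basics
variable {K A B : Type} [Field K] [Ring A] [Ring B] [Algebra K A] [Algebra K B]

lemma commute_left [Algebra.IsCentral K A] (x : A ⊗[K] B)
    (h : ∀ a : A, (a ⊗ₜ[K] (1 : B)) * x = x * (a ⊗ₜ[K] (1 : B))) : ∃ b : B, x = 1 ⊗ₜ[K] b := by
  have h1 := Subalgebra.centralizer_coe_image_includeLeft_eq_center_tensorProduct K A B Set.univ
  have hx : x ∈ Subalgebra.centralizer K
      ((Algebra.TensorProduct.includeLeft : A →ₐ[K] A ⊗[K] B) '' Set.univ) := by
    rw [Subalgebra.mem_centralizer_iff]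
    rintro _ ⟨a, -, rfl⟩
    simpa using h a
  rw [h1] at hx
  obtain ⟨w, rfl⟩ := hx
  induction w using TensorProduct.induction_on with
  | zero => exact ⟨0, by simp⟩
  | tmul a b =>
    have ha : (a : A) ∈ Subalgebra.center K A := by
      exact (Subalgebra.centralizer_univ K (A := A)).le a.2
    obtain ⟨k, hk⟩ := Algebra.IsCentral.mem_center_iff K |>.1 ha
    refine ⟨k • b, ?_⟩
    simp [hk, Algebra.algebraMap_eq_smul_one, TensorProduct.smul_tmul]
  | add y z hy hz =>
    have hc : ∀ w : (Subalgebra.centralizer K (Set.univ : Set A)) ⊗[K] B, ∀ a : A,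
      (a ⊗ₜ[K] (1 : B)) * (Algebra.TensorProduct.map
        (Subalgebra.centralizer K (Set.univ : Set A)).val (AlgHom.id K B)).toRingHom w =
      (Algebra.TensorProduct.map
        (Subalgebra.centralizer K (Set.univ : Set A)).val (AlgHom.id K B)).toRingHom w
        * (a ⊗ₜ[K] (1 : B)) := by
      intro w a
      induction w using TensorProduct.induction_on with
      | zero => simp
      | tmul c b =>
        have := (Subalgebra.mem_centralizer_iff K).1 c.2 a (Set.mem_univ _)
        simp [this]
      | add y z hy hz => rw [map_add, mul_add, hy, hz, add_mul]
    obtain ⟨b, hb⟩ := hy (hc y)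
    obtain ⟨c, hc⟩ := hz (hc z)
    exact ⟨b + c, by rw [map_add, hb, hc, TensorProduct.tmul_add]⟩

lemma one_tmul_injective [Nontrivial A] : Function.Injective (fun b : B => (1 : A) ⊗ₜ[K] b) := by
  have := Algebra.TensorProduct.includeRight_injective (R := K) (A := A) (B := B)
    (FaithfulSMul.algebraMap_injective K A)
  exact this

lemma tmul_one_injective [Nontrivial B] : Function.Injective (fun a : A => a ⊗ₜ[K] (1 : B)) := by
  have := Algebra.TensorProduct.includeLeft_injective (S := K) (R := K) (A := A) (B := B)
    (FaithfulSMul.algebraMap_injective K B)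
  exact this

instance central_tensor [Nontrivial A] [Algebra.IsCentral K A] [Algebra.IsCentral K B] :
    Algebra.IsCentral K (A ⊗[K] B) where
  out := by
    intro x hx
    rw [Subalgebra.mem_center_iff] at hx
    obtain ⟨b, rfl⟩ := commute_left x (fun a => (hx _))
    have hb : b ∈ Subalgebra.center K B := by
      rw [Subalgebra.mem_center_iff]
      intro c
      have := hx (1 ⊗ₜ c)
      simp only [Algebra.TensorProduct.tmul_mul_tmul, one_mul] at this
      exact one_tmul_injective this
    obtain ⟨k, rfl⟩ := Algebra.IsCentral.mem_center_iff K |>.1 hb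
    rw [Algebra.mem_bot]
    exact ⟨k, by simp [Algebra.algebraMap_eq_smul_one, Algebra.TensorProduct.one_def]⟩

instance simple_tensor [Algebra.IsCentral K A] [IsSimpleRing A] [IsSimpleRing B] :
    IsSimpleRing (A ⊗[K] B) := by
  have : Nontrivial (A ⊗[K] B) := by
    refine ⟨1 ⊗ₜ 1, 1 ⊗ₜ 0, fun h => ?_⟩
    exact one_ne_zero (one_tmul_injective h)
  apply IsSimpleRing.of_eq_bot_or_eq_top
  intro I
  by_cases hI : I = ⊥
  · exact Or.inl hI
  right
  classical
  let bB := Module.Free.chooseBasis K B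
  let e : A ⊗[K] B ≃ₗ[K] _ →₀ A := TensorProduct.equivFinsuppOfBasisRight bB
  have eL : ∀ (a : A) x i, e ((a ⊗ₜ 1) * x) i = a * e x i := by
    intro a x i
    induction x using TensorProduct.induction_on with
    | zero => simp
    | tmul c b => simp [e]
    | add y z hy hz => simp [mul_add, hy, hz]
  have eR : ∀ (a : A) x i, e (x * (a ⊗ₜ 1)) i = e x i * a := by
    intro a x i
    induction x using TensorProduct.induction_on with
    | zero => simp
    | tmul c b => simp [e]
    | add y z hy hz => simp [add_mul, hy, hz]
  have hne : ∃ n, ∃ x ∈ I, x ≠ 0 ∧ (e x).support.card = n := by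
    by_contra hcon
    push Not at hcon
    apply hI
    rw [eq_bot_iff]
    intro x hx
    by_contra hx0
    exact hcon _ x hx (by simpa using hx0) rfl
  obtain ⟨x, hxI, hx0, hxn⟩ := Nat.find_spec hne
  have hmin : ∀ y ∈ I, (e y).support ⊂ (e x).support → y = 0 := by
    intro y hy hs
    by_contra hy0
    have := Finset.card_lt_card hs
    rw [hxn] at this
    exact Nat.find_min hne this ⟨y, hy, hy0, rfl⟩
  obtain ⟨j, hj⟩ : ∃ j, e x j ≠ 0 := by
    by_contra hcon
    push Not at hcon
    exact hx0 (e.injective (by ext i; simpa using hcon i))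
  let J : TwoSidedIdeal A := TwoSidedIdeal.mk' {a | ∃ y ∈ I, (e y).support ⊆ (e x).support ∧ e y j = a}
    ⟨0, I.zero_mem, by simp, by simp⟩
    (by
      rintro _ _ ⟨y, hy, hys, rfl⟩ ⟨z, hz, hzs, rfl⟩
      refine ⟨y + z, I.add_mem hy hz, ?_, by simp⟩
      rw [map_add]
      exact Finsupp.support_add.trans (Finset.union_subset hys hzs))
    (by
      rintro _ ⟨y, hy, hys, rfl⟩
      exact ⟨-y, I.neg_mem hy, by simpa using hys, by simp⟩)
    (by
      rintro a _ ⟨y, hy, hys, rfl⟩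
      refine ⟨(a ⊗ₜ 1) * y, I.mul_mem_left _ _ hy, ?_, eL _ _ _⟩
      intro i hi
      apply hys
      simp only [Finsupp.mem_support_iff, eL] at hi ⊢
      exact right_ne_zero_of_mul hi)
    (by
      rintro _ a ⟨y, hy, hys, rfl⟩
      refine ⟨y * (a ⊗ₜ 1), I.mul_mem_right _ _ hy, ?_, eR _ _ _⟩
      intro i hi
      apply hys
      simp only [Finsupp.mem_support_iff, eR] at hi ⊢
      exact left_ne_zero_of_mul hi)
  have hJ : (1 : A) ∈ J := by
    apply IsSimpleRing.one_mem_of_ne_zero_mem J hj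
    rw [TwoSidedIdeal.mem_mk']
    exact ⟨x, hxI, le_rfl, rfl⟩
  rw [TwoSidedIdeal.mem_mk'] at hJ
  obtain ⟨y, hyI, hys, hyj⟩ := hJ
  have hcomm : ∀ a : A, (a ⊗ₜ[K] (1 : B)) * y = y * (a ⊗ₜ[K] (1 : B)) := by
    intro a
    rw [← sub_eq_zero]
    apply hmin _ (I.sub_mem (I.mul_mem_left _ _ hyI) (I.mul_mem_right _ _ hyI))
    rw [Finset.ssubset_iff_of_subset]
    · refine ⟨j, by simpa using hj, ?_⟩
      simp [eL, eR, hyj]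
    · intro i hi
      apply hys
      simp only [Finsupp.mem_support_iff, map_sub, Finsupp.coe_sub, Pi.sub_apply, eL, eR] at hi ⊢
      intro h0
      apply hi
      simp [h0]
  obtain ⟨b, rfl⟩ := commute_left y hcomm
  have hb0 : b ≠ 0 := by
    rintro rfl
    simp at hyj
  let J2 : TwoSidedIdeal B := I.comap (Algebra.TensorProduct.includeRight : B →ₐ[K] A ⊗[K] B)
  have h1 : (1 : B) ∈ J2 := by
    apply IsSimpleRing.one_mem_of_ne_zero_mem J2 hb0
    rw [TwoSidedIdeal.mem_comap]
    exact hyI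
  rw [TwoSidedIdeal.mem_comap] at h1
  rw [← TwoSidedIdeal.one_mem_iff]
  rw [Algebra.TensorProduct.one_def]
  exact h1

end basics

section basechange
variable {K A P : Type} [Field K] [Ring A] [Algebra K A] [Field P] [Algebra K P]

instance central_baseChange [Nontrivial A] [Algebra.IsCentral K A] :
    Algebra.IsCentral P (P ⊗[K] A) where
  out := by
    intro x hx
    rw [Subalgebra.mem_center_iff] at hx
    have h2 : ∀ a : A, (a ⊗ₜ[K] (1 : P)) * (Algebra.TensorProduct.comm K P A x) =
        (Algebra.TensorProduct.comm K P A x) * (a ⊗ₜ[K] (1 : P)) := by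
      intro a
      have := congrArg (Algebra.TensorProduct.comm K P A) (hx (1 ⊗ₜ a))
      simpa using this
    obtain ⟨p, hp⟩ := commute_left _ h2
    rw [Algebra.mem_bot]
    refine ⟨p, ?_⟩
    apply (Algebra.TensorProduct.comm K P A).injective
    rw [hp]
    simp [Algebra.TensorProduct.algebraMap_apply]

instance simple_baseChange [Algebra.IsCentral K A] [IsSimpleRing A] :
    IsSimpleRing (P ⊗[K] A) :=
  IsSimpleRing.of_ringEquiv (Algebra.TensorProduct.comm K A P).toRingEquiv inferInstance

end basechange
end GPD


namespace GPD

lemma simple_modules_iso (A : Type) [Ring A] [IsSimpleRing A] [IsArtinianRing A]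
    (S T : Type) [AddCommGroup S] [AddCommGroup T] [Module A S] [Module A T]
    [IsSimpleModule A S] [IsSimpleModule A T] : Nonempty (S ≃ₗ[A] T) := by
  obtain ⟨I, ⟨e⟩⟩ := IsSemisimpleRing.exists_linearEquiv_ideal_of_isSimpleModule A S
  obtain ⟨J, ⟨f⟩⟩ := IsSemisimpleRing.exists_linearEquiv_ideal_of_isSimpleModule A T
  have := IsSimpleModule.congr e.symm
  have := IsSimpleModule.congr f.symm
  obtain ⟨g⟩ := IsSimpleRing.isIsotypic A A J I
  exact ⟨e.trans (g.trans f.symm)⟩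

theorem wedd (K A : Type) [Field K] [Ring A] [Algebra K A] [IsSimpleRing A]
    [FiniteDimensional K A] :
    ∃ (r : ℕ) (_ : NeZero r) (E : Type) (_ : DivisionRing E) (_ : Algebra K E)
      (_ : FiniteDimensional K E),
      Nonempty (A ≃ₐ[K] Matrix (Fin r) (Fin r) E) ∧
      (∀ (V : Type) [AddCommGroup V] [Module K V] [Module A V] [IsScalarTower K A V]
        [FiniteDimensional K V], r * Module.finrank K E ∣ Module.finrank K V) ∧
      (∀ (V : Type) [AddCommGroup V] [Module K V] [Module A V] [IsScalarTower K A V]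
        [FiniteDimensional K V] [IsSimpleModule A V],
          Module.finrank K V = r * Module.finrank K E ∧
          Module.finrank K (Module.End A V) = Module.finrank K E) := by
  have := IsArtinianRing.of_finite K A
  obtain ⟨n, hn, S, hS, ⟨e⟩⟩ := (IsSimpleRing.isIsotypic A A).linearEquiv_fun
  classical
  have iso : A ≃ₐ[K] Matrix (Fin n) (Fin n) (Module.End A S)ᵐᵒᵖ :=
    .trans (.opOp K A) <| .trans (.op (.trans (.moduleEndSelf K) <|
      .trans (e.conjAlgEquiv K) (endVecAlgEquivMatrixEnd ..))) (.symm .mopMatrix)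
  have hfinE : FiniteDimensional K (Module.End A S)ᵐᵒᵖ := by
    have := Module.Finite.equiv iso.toLinearEquiv
    exact .of_surjective
      (Matrix.entryLinearMap K _ (0 : Fin n) (0 : Fin n)) fun f ↦ ⟨fun _ _ ↦ f, rfl⟩
  have hfinS : FiniteDimensional K S := by
    have := Module.Finite.equiv (e.restrictScalars K)
    exact .of_surjective
      (LinearMap.proj (0 : Fin n) : (Fin n → S) →ₗ[K] S) fun f ↦ ⟨fun _ ↦ f, rfl⟩
  have hn0 : 0 < n := Nat.pos_of_ne_zero hn.out
  have h1 : Module.finrank K A = n * Module.finrank K S := by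
    rw [(e.restrictScalars K).finrank_eq, Module.finrank_pi_fintype]
    simp
  have h2 : Module.finrank K A = n * n * Module.finrank K (Module.End A S)ᵐᵒᵖ := by
    rw [iso.toLinearEquiv.finrank_eq]
    simp [Module.finrank_matrix]
  have h3 : Module.finrank K S = n * Module.finrank K (Module.End A S)ᵐᵒᵖ := by
    have : n * Module.finrank K S = n * (n * Module.finrank K (Module.End A S)ᵐᵒᵖ) := by
      rw [← h1, h2, mul_assoc]
    exact Nat.eq_of_mul_eq_mul_left hn0 this
  refine ⟨n, hn, (Module.End A S)ᵐᵒᵖ, inferInstance, inferInstance, hfinE, ⟨iso⟩, ?_, ?_⟩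
  · intro V _ _ _ _ _
    rcases subsingleton_or_nontrivial V with hV | hV
    · rw [Module.finrank_zero_of_subsingleton (M := V)]
      exact dvd_zero _
    have : Module.Finite A V := Module.Finite.of_restrictScalars_finite K A V
    obtain ⟨k, hk, S', hS', ⟨f⟩⟩ := (IsSimpleRing.isIsotypic A V).linearEquiv_fun
    obtain ⟨g⟩ := simple_modules_iso A S' S
    have : FiniteDimensional K S' := Module.Finite.equiv (g.restrictScalars K).symm
    rw [(f.restrictScalars K).finrank_eq, ← h3, Module.finrank_pi_fintype]
    simp [(g.restrictScalars K).finrank_eq]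
  · intro V _ _ _ _ _ _
    obtain ⟨g⟩ := simple_modules_iso A V S
    refine ⟨by rw [(g.restrictScalars K).finrank_eq, h3], ?_⟩
    rw [(g.conjAlgEquiv K).toLinearEquiv.finrank_eq]
    exact (MulOpposite.opLinearEquiv K).finrank_eq

/-- dimension of a module over a matrix algebra over a division ring, transported by an algebra
isomorphism -/
lemma central_of_matrix {K E : Type} [Field K] [Ring E] [Algebra K E] {r : ℕ} [NeZero r]
    [Algebra.IsCentral K (Matrix (Fin r) (Fin r) E)] : Algebra.IsCentral K E where
  out := by
    intro x hx
    rw [Subalgebra.mem_center_iff] at hx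
    have : Matrix.scalar (Fin r) x ∈ Subalgebra.center K (Matrix (Fin r) (Fin r) E) := by
      rw [Subalgebra.mem_center_iff]
      intro M
      ext i j
      simp [Matrix.scalar_apply, hx]
    obtain ⟨k, hk⟩ := Algebra.IsCentral.mem_center_iff K |>.1 this
    rw [Algebra.mem_bot]
    refine ⟨k, ?_⟩
    have := congrFun (congrFun hk 0) 0
    simpa [Matrix.algebraMap_matrix_apply, Matrix.scalar_apply] using this.symm

end GPD


namespace GPD

/-- The Brauer group (all algebras in `Type`). -/
def Br (K : Type) [Field K] : Type 1 := BrauerGroup.{0, 0} K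

/-- Brauer class -/
def cls (K A : Type) [Field K] [Ring A] [Algebra K A] [Algebra.IsCentral K A] [IsSimpleRing A]
    [FiniteDimensional K A] : Br K :=
  Quotient.mk (Brauer.CSA_Setoid K) (CSA.mk (AlgCat.of K A))

section
variable {K : Type} [Field K]

lemma cls_surj (x : Br K) : ∃ (A : Type) (_ : Ring A) (_ : Algebra K A) (_ : Algebra.IsCentral K A)
    (_ : IsSimpleRing A) (_ : FiniteDimensional K A), x = cls K A := by
  induction x using Quotient.inductionOn with
  | h A => exact ⟨A, inferInstance, inferInstance, inferInstance, inferInstance, inferInstance, rfl⟩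

variable {A B C : Type} [Ring A] [Algebra K A] [Algebra.IsCentral K A] [IsSimpleRing A]
    [FiniteDimensional K A] [Ring B] [Algebra K B] [Algebra.IsCentral K B] [IsSimpleRing B]
    [FiniteDimensional K B] [Ring C] [Algebra K C] [Algebra.IsCentral K C] [IsSimpleRing C]
    [FiniteDimensional K C]

lemma cls_eq_iff : cls K A = cls K B ↔ ∃ n m : ℕ, n ≠ 0 ∧ m ≠ 0 ∧
    (Nonempty <| Matrix (Fin n) (Fin n) A ≃ₐ[K] Matrix (Fin m) (Fin m) B) :=
  Quotient.eq (r := Brauer.CSA_Setoid K)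

lemma cls_congr (e : A ≃ₐ[K] B) : cls K A = cls K B :=
  cls_eq_iff.2 ⟨1, 1, one_ne_zero, one_ne_zero, ⟨e.mapMatrix⟩⟩

lemma cls_of_matrix {r : ℕ} [NeZero r] (e : A ≃ₐ[K] Matrix (Fin r) (Fin r) B) :
    cls K A = cls K B := by
  refine cls_eq_iff.2 ⟨1, r, one_ne_zero, NeZero.ne r, ⟨?_⟩⟩
  exact e.mapMatrix.trans ((Matrix.compAlgEquiv _ _ _ _).trans
    (Matrix.reindexAlgEquiv K B (Equiv.uniqueProd (Fin r) (Fin 1))))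

/-- tensor product of classes on the level of `CSA`. -/
def tens (A B : CSA.{0, 0} K) : CSA.{0, 0} K := CSA.mk (AlgCat.of K (A ⊗[K] B))

noncomputable instance : Mul (Br K) where
  mul := Quotient.map₂ tens (by
    rintro A A' ⟨n, m, hn, hm, ⟨e⟩⟩ B B' ⟨p, q, hp, hq, ⟨f⟩⟩
    refine ⟨n * p, m * q, by simp_all, by simp_all, ⟨?_⟩⟩
    exact (Matrix.reindexAlgEquiv K _ finProdFinEquiv).symm.trans <|
      (Matrix.kroneckerTMulAlgEquiv (Fin n) (Fin p) K K A B).symm.trans <|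
      (Algebra.TensorProduct.congr e f).trans <|
      (Matrix.kroneckerTMulAlgEquiv (Fin m) (Fin q) K K A' B').trans <|
      Matrix.reindexAlgEquiv K _ finProdFinEquiv)

noncomputable instance : One (Br K) where
  one := cls K K

/-- opposite on the level of `CSA`. -/
def opp (A : CSA.{0, 0} K) : CSA.{0, 0} K := CSA.mk (AlgCat.of K (A.carrier)ᵐᵒᵖ)

noncomputable instance : Inv (Br K) where
  inv := Quotient.map opp (by
    rintro A A' ⟨n, m, hn, hm, ⟨e⟩⟩
    refine ⟨n, m, hn, hm, ⟨?_⟩⟩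
    exact (AlgEquiv.mopMatrix (R := K) (α := A) (m := Fin n)).trans <| (AlgEquiv.op e).trans <|
      (AlgEquiv.mopMatrix (R := K) (α := A') (m := Fin m)).symm)

lemma cls_mul : cls K (A ⊗[K] B) = cls K A * cls K B := rfl

lemma cls_one : cls K K = 1 := rfl

lemma cls_inv : cls K Aᵐᵒᵖ = (cls K A)⁻¹ := rfl

lemma equiv_end {V : Type} [AddCommGroup V] [Module K V] [FiniteDimensional K V] [Nontrivial V]
    (f : B →ₐ[K] Module.End K V) (h : Module.finrank K V ^ 2 ≤ Module.finrank K B) :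
    Nonempty (B ≃ₐ[K] Module.End K V) := by
  have inj : Function.Injective f := RingHom.injective f.toRingHom
  have hd : Module.finrank K B = Module.finrank K (Module.End K V) := by
    apply le_antisymm
    · exact LinearMap.finrank_le_finrank_of_injective (f := f.toLinearMap) inj
    · change Module.finrank K (V →ₗ[K] V) ≤ _
      rw [Module.finrank_linearMap, ← sq]
      exact h
  exact ⟨AlgEquiv.ofBijective f ⟨inj,
    (LinearMap.injective_iff_surjective_of_finrank_eq_finrank (f := f.toLinearMap) hd).1 inj⟩⟩

lemma cls_end {V : Type} [AddCommGroup V] [Module K V] [FiniteDimensional K V] [Nontrivial V]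
    (e : A ≃ₐ[K] Module.End K V) : cls K A = 1 := by
  have : NeZero (Module.finrank K V) := ⟨Module.finrank_pos.ne'⟩
  rw [← cls_one]
  apply cls_of_matrix (r := Module.finrank K V)
  exact e.trans (algEquivMatrix (Module.finBasis K V))

lemma cls_mul_inv : cls K A * (cls K A)⁻¹ = 1 := by
  rw [← cls_inv, ← cls_mul]
  obtain ⟨e⟩ := equiv_end (AlgHom.mulLeftRight K A) (by
    rw [Module.finrank_tensorProduct, sq, (MulOpposite.opLinearEquiv K (M := A)).finrank_eq])
  exact cls_end e

noncomputable instance : CommGroup (Br K) where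
  mul_assoc := by
    intro x y z
    obtain ⟨A, _, _, _, _, _, rfl⟩ := cls_surj x
    obtain ⟨B, _, _, _, _, _, rfl⟩ := cls_surj y
    obtain ⟨C, _, _, _, _, _, rfl⟩ := cls_surj z
    exact cls_congr (Algebra.TensorProduct.assoc K K K A B C)
  one_mul := by
    intro x
    obtain ⟨A, _, _, _, _, _, rfl⟩ := cls_surj x
    exact cls_congr (Algebra.TensorProduct.lid K A)
  mul_one := by
    intro x
    obtain ⟨A, _, _, _, _, _, rfl⟩ := cls_surj x
    exact cls_congr (Algebra.TensorProduct.rid K K A)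
  inv_mul_cancel := by
    intro x
    obtain ⟨A, _, _, _, _, _, rfl⟩ := cls_surj x
    refine Eq.trans ?_ (cls_mul_inv (A := A))
    exact cls_congr (Algebra.TensorProduct.comm K _ _)
  mul_comm := by
    intro x y
    obtain ⟨A, _, _, _, _, _, rfl⟩ := cls_surj x
    obtain ⟨B, _, _, _, _, _, rfl⟩ := cls_surj y
    exact cls_congr (Algebra.TensorProduct.comm K A B)

lemma exists_division (x : Br K) : ∃ (E : Type) (_ : DivisionRing E) (_ : Algebra K E)
    (_ : Algebra.IsCentral K E) (_ : FiniteDimensional K E), x = cls K E := by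
  obtain ⟨A, _, _, _, _, _, rfl⟩ := cls_surj x
  obtain ⟨r, hr, E, _, _, _, ⟨e⟩, -⟩ := wedd K A
  have := Algebra.IsCentral.of_algEquiv K _ _ e
  have : Algebra.IsCentral K E := central_of_matrix (r := r)
  exact ⟨E, inferInstance, inferInstance, inferInstance, inferInstance, cls_of_matrix e⟩

end

section
variable {K : Type} [Field K]

instance simple_vec {r : ℕ} [NeZero r] {E : Type} [DivisionRing E] :
    IsSimpleModule (Matrix (Fin r) (Fin r) E) (Fin r → E) := by
  rw [isSimpleModule_iff_toSpanSingleton_surjective]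
  refine ⟨inferInstance, fun v hv w => ?_⟩
  obtain ⟨j, hj⟩ := Function.ne_iff.1 hv
  refine ⟨Matrix.of fun i k => if k = j then w i * (v j)⁻¹ else 0, ?_⟩
  ext i
  have hj' : v j ≠ 0 := hj
  simp [LinearMap.toSpanSingleton_apply, Matrix.mulVec, dotProduct, hj']

lemma matrix_dvd {r : ℕ} [NeZero r] {E V : Type} [DivisionRing E] [Algebra K E]
    [FiniteDimensional K E] [AddCommGroup V] [Module K V] [FiniteDimensional K V]
    (φ : Matrix (Fin r) (Fin r) E →ₐ[K] Module.End K V) :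
    r * Module.finrank K E ∣ Module.finrank K V := by
  obtain ⟨s, hs, F, _, _, _, -, hV, hS⟩ := wedd K (Matrix (Fin r) (Fin r) E)
  have h1 := (hS (Fin r → E)).1
  letI : Module (Matrix (Fin r) (Fin r) E) V := Module.compHom _ φ.toRingHom
  have : IsScalarTower K (Matrix (Fin r) (Fin r) E) V := ⟨by
    intro x y z
    change φ (x • y) z = x • (φ y z)
    rw [map_smul]
    rfl⟩
  have h2 := hV V
  rw [← h1, Module.finrank_pi_fintype] at h2
  simpa using h2

variable {A : Type} [Ring A] [Algebra K A] [Algebra.IsCentral K A] [IsSimpleRing A]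
    [FiniteDimensional K A]

/-- division algebra with trivial class is trivial. -/
lemma finrank_of_cls_one {E : Type} [DivisionRing E] [Algebra K E] [Algebra.IsCentral K E]
    [FiniteDimensional K E] (h : cls K E = 1) : Module.finrank K E = 1 := by
  rw [← cls_one, cls_eq_iff] at h
  obtain ⟨n, m, hn, hm, ⟨e⟩⟩ := h
  have : NeZero n := ⟨hn⟩
  have h1 := matrix_dvd ((Matrix.toLinAlgEquiv' (R := K) (n := Fin m)).toAlgHom.comp e.toAlgHom)
  have h2 := e.toLinearEquiv.finrank_eq
  simp only [Module.finrank_matrix, Module.finrank_fin_fun, Fintype.card_fin, Module.finrank_self,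
    mul_one] at h1 h2
  obtain ⟨k, hk⟩ := h1
  have hE : 0 < Module.finrank K E := Module.finrank_pos
  have hn : 0 < n := by omega
  have hk0 : 0 < k := by
    rcases Nat.eq_zero_or_pos k with h | h
    · subst h; simp at hk; exact absurd hk hm
    · exact h
  generalize Module.finrank K E = d at *
  subst hk
  have h3 : (n * n * d) * (d * (k * k)) = (n * n * d) * 1 := by rw [mul_one]; nlinarith
  have h4 := Nat.eq_of_mul_eq_mul_left (by positivity) h3
  exact Nat.eq_one_of_mul_eq_one_right h4

/-- A one-dimensional algebra. -/
lemma equiv_of_finrank_one {E : Type} [DivisionRing E] [Algebra K E]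
    (h : Module.finrank K E = 1) : Nonempty (E ≃ₐ[K] K) := by
  have : FiniteDimensional K E := Module.finite_of_finrank_pos (by omega)
  refine ⟨(AlgEquiv.ofBijective (Algebra.ofId K E) ⟨(algebraMap K E).injective, ?_⟩).symm⟩
  exact (LinearMap.injective_iff_surjective_of_finrank_eq_finrank
    (f := (Algebra.ofId K E).toLinearMap) (by simp [h])).1 (algebraMap K E).injective

/-- A split algebra is a matrix algebra. -/
lemma split_of_cls_one (h : cls K A = 1) :
    ∃ m : ℕ, m ≠ 0 ∧ Nonempty (A ≃ₐ[K] Matrix (Fin m) (Fin m) K) := by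
  obtain ⟨r, hr, E, _, _, _, ⟨e⟩, -⟩ := wedd K A
  have := Algebra.IsCentral.of_algEquiv K _ _ e
  have : Algebra.IsCentral K E := central_of_matrix (r := r)
  rw [cls_of_matrix e] at h
  obtain ⟨g⟩ := equiv_of_finrank_one (finrank_of_cls_one h)
  exact ⟨r, hr.out, ⟨e.trans g.mapMatrix⟩⟩

end
end GPD


namespace GPD

section
variable {K : Type} [Field K]

lemma mat_one (P : Type) [Field P] : Nonempty (P ≃ₐ[P] Matrix (Fin 1) (Fin 1) P) := by
  refine ⟨AlgEquiv.ofBijective (Algebra.ofId P _) ⟨?_, ?_⟩⟩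
  · exact FaithfulSMul.algebraMap_injective _ _
  · intro x
    refine ⟨x 0 0, ?_⟩
    ext i j
    fin_cases i; fin_cases j
    simp [Algebra.ofId_apply, Matrix.algebraMap_matrix_apply]

variable (P : Type) [Field P] [Algebra K P]

lemma baseChange_matrix (n : ℕ) (A : Type) [Ring A] [Algebra K A] :
    Nonempty (P ⊗[K] Matrix (Fin n) (Fin n) A ≃ₐ[P] Matrix (Fin n) (Fin n) (P ⊗[K] A)) := by
  obtain ⟨e⟩ := mat_one P
  exact ⟨(Algebra.TensorProduct.congr (S := P) e (AlgEquiv.refl (R := K))).trans <|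
    (Matrix.kroneckerTMulAlgEquiv (Fin 1) (Fin n) K P P A).trans <|
    Matrix.reindexAlgEquiv P _ (Equiv.uniqueProd (Fin n) (Fin 1))⟩

/-- base change of central simple algebras. -/
def bcObj (A : CSA.{0, 0} K) : CSA.{0, 0} P := CSA.mk (AlgCat.of P (P ⊗[K] A.carrier))

lemma baseChange_tensor (A B : Type) [Ring A] [Algebra K A] [Ring B] [Algebra K B]
    [Algebra.IsCentral K A] [IsSimpleRing A] [FiniteDimensional K A]
    [Algebra.IsCentral K B] [IsSimpleRing B] [FiniteDimensional K B] :
    Nonempty (P ⊗[K] (A ⊗[K] B) ≃ₐ[P] (P ⊗[K] A) ⊗[P] (P ⊗[K] B)) := by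
  let f : A →ₐ[K] (P ⊗[K] A) ⊗[P] (P ⊗[K] B) :=
    ((Algebra.TensorProduct.includeLeft :
      P ⊗[K] A →ₐ[P] (P ⊗[K] A) ⊗[P] (P ⊗[K] B)).restrictScalars K).comp
      (Algebra.TensorProduct.includeRight : A →ₐ[K] P ⊗[K] A)
  let g : B →ₐ[K] (P ⊗[K] A) ⊗[P] (P ⊗[K] B) :=
    ((Algebra.TensorProduct.includeRight :
      P ⊗[K] B →ₐ[P] (P ⊗[K] A) ⊗[P] (P ⊗[K] B)).restrictScalars K).comp
      (Algebra.TensorProduct.includeRight : B →ₐ[K] P ⊗[K] B)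
  let h : A ⊗[K] B →ₐ[K] (P ⊗[K] A) ⊗[P] (P ⊗[K] B) :=
    Algebra.TensorProduct.lift f g (by
      intro a b
      simp [f, g, Commute, SemiconjBy])
  let k : P ⊗[K] (A ⊗[K] B) →ₐ[P] (P ⊗[K] A) ⊗[P] (P ⊗[K] B) :=
    Algebra.TensorProduct.lift (Algebra.ofId P _) h (by
      intro a b
      exact Algebra.commutes a (h b))
  have inj : Function.Injective k := RingHom.injective k.toRingHom
  refine ⟨AlgEquiv.ofBijective k ⟨inj, ?_⟩⟩
  refine (LinearMap.injective_iff_surjective_of_finrank_eq_finrank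
    (f := k.toLinearMap) ?_).1 inj
  simp [Module.finrank_tensorProduct]

/-- the base change map on Brauer groups -/
noncomputable def res : Br K →* Br P where
  toFun := Quotient.map (bcObj P) (by
    rintro A A' ⟨n, m, hn, hm, ⟨e⟩⟩
    refine ⟨n, m, hn, hm, ?_⟩
    obtain ⟨f⟩ := baseChange_matrix (K := K) P n A
    obtain ⟨g⟩ := baseChange_matrix (K := K) P m A'
    exact ⟨f.symm.trans <| (Algebra.TensorProduct.congr (S := P) (AlgEquiv.refl (R := P) (A₁ := P)) e).trans g⟩)
  map_one' := cls_congr (K := P) (A := P ⊗[K] K) (B := P) (Algebra.TensorProduct.rid K P P)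
  map_mul' := by
    intro x y
    obtain ⟨A, _, _, _, _, _, rfl⟩ := cls_surj x
    obtain ⟨B, _, _, _, _, _, rfl⟩ := cls_surj y
    obtain ⟨e⟩ := baseChange_tensor (K := K) P A B
    exact cls_congr e

lemma res_cls (A : Type) [Ring A] [Algebra K A] [Algebra.IsCentral K A] [IsSimpleRing A]
    [FiniteDimensional K A] : res P (cls K A) = cls P (P ⊗[K] A) := rfl

end
end GPD


namespace GPD

section
variable {K : Type} [Field K]

lemma split_closure (A : Type) [Ring A] [Algebra K A] [Algebra.IsCentral K A] [IsSimpleRing A]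
    [FiniteDimensional K A] : ∃ m : ℕ, m ≠ 0 ∧ Module.finrank K A = m ^ 2 ∧
      Nonempty (AlgebraicClosure K ⊗[K] A ≃ₐ[AlgebraicClosure K]
        Matrix (Fin m) (Fin m) (AlgebraicClosure K)) := by
  obtain ⟨m, hm, ⟨e⟩⟩ := IsSimpleRing.exists_algEquiv_matrix_of_isAlgClosed
    (AlgebraicClosure K) (AlgebraicClosure K ⊗[K] A)
  refine ⟨m, hm.out, ?_, ⟨e⟩⟩
  have := e.toLinearEquiv.finrank_eq
  rw [Module.finrank_baseChange] at this
  rw [this]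
  simp [Module.finrank_matrix, sq]

lemma embed_transfer {E R V : Type} [DivisionRing E] [Algebra K E] [Ring R] [Algebra K R]
    [AddCommGroup V] [Module K V] [FiniteDimensional K E]
    (ψ : E →ₐ[K] Module.End K V) (χ : R →ₐ[K] Module.End K V)
    (hc : ∀ x r, Commute (ψ x) (χ r)) (hd : Module.finrank K V = Module.finrank K E) :
    Nonempty (R →ₐ[K] Eᵐᵒᵖ) := by
  have hpos : 0 < Module.finrank K V := hd ▸ Module.finrank_pos
  have : FiniteDimensional K V := Module.finite_of_finrank_pos hpos
  have : Nontrivial V := Module.finrank_pos_iff.1 hpos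
  obtain ⟨v, hv⟩ := exists_ne (0 : V)
  let f : E →ₗ[K] V := (LinearMap.applyₗ v).comp ψ.toLinearMap
  have hf : ∀ x, f x = ψ x v := fun _ => rfl
  have inj : Function.Injective f := by
    rw [← LinearMap.ker_eq_bot, LinearMap.ker_eq_bot']
    intro x hx
    by_contra h0
    apply hv
    have h1 : ψ (x⁻¹ * x) v = 0 := by
      rw [map_mul, Module.End.mul_apply, ← hf x, hx, map_zero]
    rw [inv_mul_cancel₀ h0, map_one] at h1
    exact h1
  have sur := (LinearMap.injective_iff_surjective_of_finrank_eq_finrank hd.symm).1 inj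
  let g : E ≃ₗ[K] V := LinearEquiv.ofBijective f ⟨inj, sur⟩
  let θ : R → E := fun r => g.symm (χ r v)
  have hθ : ∀ r, ψ (θ r) v = χ r v := fun r => g.apply_symm_apply (χ r v)
  have hu : ∀ x y, ψ x v = ψ y v → x = y := fun x y h => inj h
  refine ⟨AlgHom.ofLinearMap ((MulOpposite.opLinearEquiv K).toLinearMap.comp
    (g.symm.toLinearMap.comp ((LinearMap.applyₗ v).comp χ.toLinearMap))) ?_ ?_⟩
  · change MulOpposite.op (θ 1) = 1
    rw [← MulOpposite.op_one]
    congr 1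
    apply hu
    rw [hθ, map_one, map_one]
  · intro r s
    change MulOpposite.op (θ (r * s)) = MulOpposite.op (θ r) * MulOpposite.op (θ s)
    rw [← MulOpposite.op_mul]
    congr 1
    apply hu
    rw [hθ, map_mul, map_mul, Module.End.mul_apply, Module.End.mul_apply, hθ, ← hθ s,
      ← Module.End.mul_apply, ← (hc (θ s) r).eq, Module.End.mul_apply]

lemma from_comm {P A : Type} [Field P] [Algebra K P] [Ring A] [Algebra K A]
    (f : P →ₐ[K] Aᵐᵒᵖ) : Nonempty (P →ₐ[K] A) := by
  refine ⟨AlgHom.ofLinearMap ((MulOpposite.opLinearEquiv K).symm.toLinearMap.comp f.toLinearMap)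
    (by simp) ?_⟩
  intro x y
  simp only [LinearMap.comp_apply, AlgHom.toLinearMap_apply]
  rw [mul_comm, map_mul]
  simp

variable (P : Type) [Field P] [Algebra K P]

/-- the action of `E` and `P` on `P^c`. -/
lemma split_action {E : Type} [DivisionRing E] [Algebra K E] [Algebra.IsCentral K E]
    [FiniteDimensional K E] [FiniteDimensional K P] {c : ℕ} (hc : Module.finrank K E = c ^ 2)
    (h : cls P (P ⊗[K] E) = 1) : 
    ∃ (ψ : E →ₐ[K] Module.End K (Fin c → P)) (χ : P →ₐ[K] Module.End K (Fin c → P)),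
      ∀ x r, Commute (ψ x) (χ r) := by
  obtain ⟨m, hm, ⟨e⟩⟩ := split_of_cls_one h
  have hmc : m = c := by
    have := e.toLinearEquiv.finrank_eq
    rw [Module.finrank_baseChange, hc, Module.finrank_matrix] at this
    simp [← sq] at this
    exact this.symm
  subst hmc
  let Φ : P ⊗[K] E →ₐ[K] Module.End K (Fin m → P) :=
    ((Algebra.lsmul K K (Fin m → P) :
      Matrix (Fin m) (Fin m) P →ₐ[K] Module.End K (Fin m → P))).comp
      (e.toAlgHom.restrictScalars K)
  refine ⟨Φ.comp Algebra.TensorProduct.includeRight, Φ.comp Algebra.TensorProduct.includeLeft, ?_⟩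
  intro x r
  apply Commute.map (f := Φ)
  simp [Commute, SemiconjBy]

lemma split_embed {E : Type} [DivisionRing E] [Algebra K E] [Algebra.IsCentral K E]
    [FiniteDimensional K E] {c : ℕ} (hc0 : 0 < c) (hc : Module.finrank K E = c ^ 2)
    (hP : Module.finrank K P = c)
    (h : cls P (P ⊗[K] E) = 1) : Nonempty (P →ₐ[K] E) := by
  have : FiniteDimensional K P := Module.finite_of_finrank_pos (by omega)
  obtain ⟨ψ, χ, hcomm⟩ := split_action P hc h
  obtain ⟨f⟩ := embed_transfer ψ χ hcomm (by
    rw [Module.finrank_pi_fintype]; simp [hP, hc, sq])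
  exact from_comm f

lemma dvd_of_hom {E V : Type} [DivisionRing E] [Algebra K E] 
    [AddCommGroup V] [Module K V] (φ : E →ₐ[K] Module.End K V) :
    Module.finrank K E ∣ Module.finrank K V := by
  let : Module E V := Module.compHom _ φ.toRingHom
  have : IsScalarTower K E V := ⟨by
    intro x y z
    change φ (x • y) z = x • (φ y z)
    rw [map_smul]
    rfl⟩
  exact ⟨_, (Module.finrank_mul_finrank K E V).symm⟩

lemma split_dvd {E : Type} [DivisionRing E] [Algebra K E] [Algebra.IsCentral K E]
    [FiniteDimensional K E] [FiniteDimensional K P] {c : ℕ} (hc : Module.finrank K E = c ^ 2)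
    (h : cls P (P ⊗[K] E) = 1) : c ∣ Module.finrank K P := by
  obtain ⟨ψ, χ, hcomm⟩ := split_action P hc h
  have h1 := dvd_of_hom ψ
  rw [Module.finrank_pi_fintype, hc] at h1
  simp only [Finset.sum_const, Finset.card_univ, Fintype.card_fin, smul_eq_mul, sq] at h1
  have hc0 : 0 < c := by
    rcases Nat.eq_zero_or_pos c with h0 | h0
    · subst h0
      have : 0 < Module.finrank K E := Module.finrank_pos
      omega
    · exact h0
  exact Nat.dvd_of_mul_dvd_mul_left hc0 h1

end
end GPD


namespace GPD

section
variable {K : Type} [Field K]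
variable {D : Type} [DivisionRing D] [Algebra K D]

/-- the two-sided action of `F` and `D` on `D`. -/
noncomputable def biact {F : Type} [Field F] [Algebra K F] (j : F →ₐ[K] D) :
    F ⊗[K] Dᵐᵒᵖ →ₐ[K] Module.End K D :=
  (AlgHom.mulLeftRight K D).comp (Algebra.TensorProduct.map j (AlgHom.id K _))

lemma biact_apply {F : Type} [Field F] [Algebra K F] (j : F →ₐ[K] D) (x : F) (y : Dᵐᵒᵖ) (z : D) :
    biact j (x ⊗ₜ y) z = j x * z * y.unop := by
  simp [biact]

variable [Algebra.IsCentral K D] [FiniteDimensional K D]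

lemma subfield_index {F : Type} [Field F] [Algebra K F] (j : F →ₐ[K] D) {n : ℕ} 
    (hn : Module.finrank K D = n ^ 2) :
    ∃ (s c : ℕ) (E : Type) (_ : DivisionRing E) (_ : Algebra F E) (_ : Algebra.IsCentral F E)
      (_ : FiniteDimensional F E), s * c = n ∧ Module.finrank K F ∣ s ∧
        Module.finrank F E = c ^ 2 ∧ cls F (F ⊗[K] Dᵐᵒᵖ) = cls F E := by
  obtain ⟨s, hs, E, _, _, _, ⟨e⟩, -⟩ := wedd F (F ⊗[K] Dᵐᵒᵖ)
  have := Algebra.IsCentral.of_algEquiv F _ _ e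
  have : Algebra.IsCentral F E := central_of_matrix (r := s)
  obtain ⟨c, hc, hEc, -⟩ := split_closure (K := F) E
  have hfin : FiniteDimensional K F :=
    FiniteDimensional.of_injective j.toLinearMap (RingHom.injective j.toRingHom)
  have h1 := e.toLinearEquiv.finrank_eq
  rw [Module.finrank_baseChange, Module.finrank_matrix, hEc,
    ← (MulOpposite.opLinearEquiv K (M := D)).finrank_eq, hn] at h1
  simp only [Fintype.card_fin] at h1
  have h2 : s * c = n := by
    have : n ^ 2 = (s * c) ^ 2 := by rw [h1]; ring
    exact (Nat.pow_left_injective (n := 2) two_ne_zero this).symm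
  refine ⟨s, c, E, inferInstance, inferInstance, inferInstance, inferInstance, h2, ?_, hEc,
    cls_of_matrix e⟩
  let : Algebra K E := Algebra.compHom E (algebraMap K F)
  have : IsScalarTower K F E := IsScalarTower.of_algebraMap_eq (fun _ => rfl)
  have : FiniteDimensional K E := FiniteDimensional.trans K F E
  have h3 := matrix_dvd ((biact j).comp (e.symm.toAlgHom.restrictScalars K))
  rw [hn, ← Module.finrank_mul_finrank K F E, hEc, ← h2] at h3
  have hs0 : 0 < s := Nat.pos_of_ne_zero hs.out
  have hc0 : 0 < c := Nat.pos_of_ne_zero hc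
  have h4 : (s * c ^ 2) * Module.finrank K F ∣ (s * c ^ 2) * s := by
    convert h3 using 1 <;> ring
  exact Nat.dvd_of_mul_dvd_mul_left (by positivity) h4

lemma exists_max_comm : ∃ S : Subalgebra K D, (∀ x ∈ S, ∀ y ∈ S, x * y = y * x) ∧
    ∀ x : D, (∀ y ∈ S, x * y = y * x) → x ∈ S := by
  classical
  let p : ℕ → Prop := fun k => ∃ S : Subalgebra K D, (∀ x ∈ S, ∀ y ∈ S, x * y = y * x) ∧
    Module.finrank K S = k
  have hb : ∀ k, p k → k ≤ Module.finrank K D := by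
    rintro k ⟨S, -, rfl⟩
    exact Submodule.finrank_le (Subalgebra.toSubmodule S)
  have h0 : p (Module.finrank K (⊥ : Subalgebra K D)) := by
    refine ⟨⊥, ?_, rfl⟩
    intro x hx y hy
    obtain ⟨a, rfl⟩ := Algebra.mem_bot.1 hx
    exact Algebra.commutes a y
  obtain ⟨S, hS, hk⟩ := Nat.findGreatest_spec (P := p) (hb _ h0) h0
  refine ⟨S, hS, fun x hx => ?_⟩
  let T := Algebra.adjoin K ((S : Set D) ∪ {x})
  have hST : S ≤ T := fun y hy => Algebra.subset_adjoin (Or.inl hy)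
  have hT : ∀ y ∈ T, ∀ z ∈ T, y * z = z * y := by
    have hc : ∀ a ∈ ((S : Set D) ∪ {x}), ∀ b ∈ ((S : Set D) ∪ {x}), a * b = b * a := by
      rintro a (ha | rfl) b (hb | rfl)
      · exact hS a ha b hb
      · exact (hx a ha).symm
      · exact hx b hb
      · rfl
    intro y hy z hz
    have := (Algebra.isMulCommutative_adjoin K hc).is_comm.comm ⟨y, hy⟩ ⟨z, hz⟩
    exact congrArg Subtype.val this
  have hle : Module.finrank K T ≤ Module.finrank K S := by
    rw [hk]
    exact Nat.le_findGreatest (hb _ ⟨T, hT, rfl⟩) ⟨T, hT, rfl⟩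
  have heq : Subalgebra.toSubmodule S = Subalgebra.toSubmodule T :=
    Submodule.eq_of_le_of_finrank_le hST hle
  have : S = T := Subalgebra.toSubmodule_injective heq
  rw [this]
  exact Algebra.subset_adjoin (Or.inr rfl)

lemma exists_max_subfield {n : ℕ} (hn : Module.finrank K D = n ^ 2) :
    ∃ (F : Type) (_ : Field F) (_ : Algebra K F), Module.finrank K F = n ∧
      Nonempty (F →ₐ[K] D) := by
  obtain ⟨S, hS, hmax⟩ := exists_max_comm (K := K) (D := D)
  let cr : CommRing S := { (inferInstance : Ring S) with
    mul_comm := fun x y => Subtype.ext (hS x x.2 y y.2) }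
  have : IsDomain S := inferInstance
  let fS : Field S := { fieldOfFiniteDimensional K S with }
  refine ⟨S, fS, inferInstance, ?_, ⟨S.val⟩⟩
  let j : S →ₐ[K] D := S.val
  obtain ⟨s, c, E, _, _, _, _, h1, h2, -⟩ := subfield_index j hn
  obtain ⟨r, hr, E', _, _, _, ⟨e⟩, -, h4⟩ := wedd K (S ⊗[K] Dᵐᵒᵖ)
  let : Module (S ⊗[K] Dᵐᵒᵖ) D := Module.compHom _ (biact j).toRingHom
  have hsm : ∀ (x : S) (y : D) (z : D), (x ⊗ₜ[K] MulOpposite.op y) • z = j x * z * y :=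
    fun x y z => biact_apply j x (MulOpposite.op y) z
  have : IsScalarTower K (S ⊗[K] Dᵐᵒᵖ) D := ⟨by
    intro x y z
    change biact j (x • y) z = x • (biact j y z)
    rw [map_smul]
    rfl⟩
  have : IsSimpleModule (S ⊗[K] Dᵐᵒᵖ) D := by
    rw [isSimpleModule_iff_toSpanSingleton_surjective]
    refine ⟨inferInstance, fun v hv w => ⟨1 ⊗ₜ MulOpposite.op (v⁻¹ * w), ?_⟩⟩
    rw [LinearMap.toSpanSingleton_apply, hsm]
    simp [hv]
  obtain ⟨h5, h6⟩ := h4 D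
  have h7 : Module.finrank K (Module.End (S ⊗[K] Dᵐᵒᵖ) D) ≤ Module.finrank K S := by
    have hmem : ∀ f : Module.End (S ⊗[K] Dᵐᵒᵖ) D, f 1 ∈ S := by
      intro f
      apply hmax
      intro y hy
      have e1 := f.map_smul ((⟨y, hy⟩ : S) ⊗ₜ[K] MulOpposite.op 1) 1
      have e2 := f.map_smul ((1 : S) ⊗ₜ[K] MulOpposite.op y) 1
      rw [hsm, hsm] at e1 e2
      simp at e1 e2
      rw [← e2]
      exact e1
    let g : Module.End (S ⊗[K] Dᵐᵒᵖ) D →ₗ[K] S :=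
      { toFun := fun f => ⟨f 1, hmem f⟩
        map_add' := fun f g => rfl
        map_smul' := fun f g => rfl }
    refine LinearMap.finrank_le_finrank_of_injective (f := g) ?_
    intro f f' hff
    have hff' : f 1 = f' 1 := congrArg Subtype.val hff
    ext x
    have e1 := f.map_smul ((1 : S) ⊗ₜ[K] MulOpposite.op x) 1
    have e2 := f'.map_smul ((1 : S) ⊗ₜ[K] MulOpposite.op x) 1
    rw [hsm, hsm] at e1 e2
    simp at e1 e2
    rw [e1, e2, hff']
  have h8 := e.toLinearEquiv.finrank_eq
  rw [Module.finrank_tensorProduct, Module.finrank_matrix,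
    ← (MulOpposite.opLinearEquiv K (M := D)).finrank_eq, hn] at h8
  simp only [Fintype.card_fin] at h8
  rw [h6] at h7
  rw [hn] at h5
  have hr0 : 0 < r := Nat.pos_of_ne_zero hr.out
  have hE : 0 < Module.finrank K E' := Module.finrank_pos
  have hdn : Module.finrank K S ∣ n := h1 ▸ h2.mul_right c
  have hn0 : 0 < n := by
    rcases Nat.eq_zero_or_pos n with h | h
    · subst h
      have : 0 < Module.finrank K D := Module.finrank_pos
      omega
    · exact h
  have hle := Nat.le_of_dvd hn0 hdn
  apply le_antisymm hle
  generalize Module.finrank K E' = x at *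
  change x ≤ Module.finrank K S at h7
  change Module.finrank K S * _ = _ at h8
  generalize Module.finrank K S = d at *
  have : r = d := by
    have : n ^ 2 * d = n ^ 2 * r := by rw [mul_comm, h8, h5]; ring
    exact (Nat.eq_of_mul_eq_mul_left (by positivity) this).symm
  subst this
  nlinarith

end
end GPD


namespace GPD

section
open Polynomial

lemma charpoly_blockDiagonal' {R : Type} [CommRing R] {n m : ℕ} (X : Matrix (Fin n) (Fin n) R) :
    (Matrix.blockDiagonal (fun _ : Fin m => X)).charpoly = X.charpoly ^ m := by
  have : (Matrix.blockDiagonal (fun _ : Fin m => X)).charmatrix =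
      Matrix.blockDiagonal (fun _ : Fin m => X.charmatrix) := by
    ext ⟨i, k⟩ ⟨j, l⟩ : 2
    simp only [Matrix.charmatrix_apply, Matrix.blockDiagonal_apply, Matrix.diagonal_apply,
      Prod.mk.injEq]
    by_cases h : k = l <;> simp [h]
  rw [Matrix.charpoly, this, Matrix.det_blockDiagonal]
  simp [Matrix.charpoly]

lemma charpoly_mulLeft_matrix {L : Type} [Field L] {n : ℕ} (X : Matrix (Fin n) (Fin n) L) :
    (LinearMap.mulLeft L X).charpoly = X.charpoly ^ n := by
  rw [← LinearMap.charpoly_toMatrix _ (Matrix.stdBasis L (Fin n) (Fin n)),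
    ← charpoly_blockDiagonal']
  congr 1
  ext ⟨i, k⟩ ⟨j, l⟩
  rw [LinearMap.toMatrix_apply, Matrix.blockDiagonal_apply]
  simp only [LinearMap.mulLeft_apply, Matrix.stdBasis_eq_single]
  have : ∀ (M : Matrix (Fin n) (Fin n) L) i j, (Matrix.stdBasis L (Fin n) (Fin n)).repr M (i, j)
      = M i j := by
    intro M i j
    simp [Matrix.stdBasis]
  rw [this]
  simp [Matrix.mul_apply, Matrix.single_apply, ite_and, eq_comm]

variable {K : Type} [Field K]

lemma charpoly_mulLeft_map {L D : Type} [Field L] [Algebra K L] [Ring D] [Algebra K D]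
    [FiniteDimensional K D] {n : ℕ} (e : L ⊗[K] D ≃ₐ[L] Matrix (Fin n) (Fin n) L) (x : D) :
    (LinearMap.mulLeft K x).charpoly.map (algebraMap K L) = (e (1 ⊗ₜ x)).charpoly ^ n := by
  rw [← charpoly_mulLeft_matrix, ← LinearMap.charpoly_baseChange]
  rw [← LinearEquiv.charpoly_conj e.toLinearEquiv]
  congr 1
  apply LinearMap.ext
  intro y
  obtain ⟨y, rfl⟩ := e.surjective y
  rw [LinearEquiv.conj_apply_apply]
  simp only [LinearMap.mulLeft_apply, ← map_mul]
  change e _ = _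
  congr 1
  have : e.toLinearEquiv.symm (e y) = y := e.symm_apply_apply y
  rw [this]
  clear this
  induction y with
  | zero => simp
  | add a b ha hb => rw [map_add, ha, hb, mul_add]
  | tmul a b => simp

lemma monic_eq_pow {C m : K[X]} (hC : C.Monic) (hm : m.Monic) 
    (h : ∀ q : K[X], Irreducible q → q ∣ C → q ∣ m) (hi : Irreducible m) : ∃ k, C = m ^ k := by
  classical
  open UniqueFactorizationMonoid in
  have h1 : normalizedFactors C = Multiset.replicate (Multiset.card (normalizedFactors C)) m := by
    rw [Multiset.eq_replicate]
    refine ⟨rfl, fun q hq => ?_⟩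
    have hqi := irreducible_of_normalized_factor q hq
    have hqm := h q hqi (dvd_of_mem_normalizedFactors hq)
    have hass : Associated q m := (hqi.dvd_irreducible_iff_associated hi).1 hqm
    have hqn := normalize_normalized_factor q hq
    rw [← hqn, ← hm.normalize_eq_self]
    exact normalize_eq_normalize hass.dvd hass.symm.dvd
  have h2 := UniqueFactorizationMonoid.prod_normalizedFactors hC.ne_zero
  rw [h1, Multiset.prod_replicate] at h2
  exact ⟨_, (Polynomial.eq_of_monic_of_associated (hm.pow _) hC h2).symm⟩

variable {D : Type} [DivisionRing D] [Algebra K D] [Algebra.IsCentral K D] [FiniteDimensional K D]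

lemma minpoly_degree_dvd {n : ℕ} (hn : Module.finrank K D = n ^ 2) (x : D) :
    (minpoly K x).natDegree ∣ n := by
  have hx : IsIntegral K x := Algebra.IsIntegral.isIntegral x
  have : Fact (Irreducible (minpoly K x)) := ⟨minpoly.irreducible hx⟩
  let j : AdjoinRoot (minpoly K x) →ₐ[K] D :=
    Ideal.Quotient.liftₐ _ (Polynomial.aeval x) (by
      intro a ha
      obtain ⟨b, rfl⟩ := Ideal.mem_span_singleton.1 ha
      simp)
  obtain ⟨s, c, E, _, _, _, _, h1, h2, -⟩ := subfield_index j hn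
  rw [PowerBasis.finrank (AdjoinRoot.powerBasis (minpoly.ne_zero hx)), 
    AdjoinRoot.powerBasis_dim] at h2
  exact h1 ▸ h2.mul_right c

lemma det_rational {n : ℕ} (hn0 : 0 < n) (hn : Module.finrank K D = n ^ 2) 
    (e : AlgebraicClosure K ⊗[K] D ≃ₐ[AlgebraicClosure K]
        Matrix (Fin n) (Fin n) (AlgebraicClosure K)) (x : D) :
    ∃ k : K, algebraMap K (AlgebraicClosure K) k = (e (1 ⊗ₜ x)).det := by
  have hx : IsIntegral K x := Algebra.IsIntegral.isIntegral x
  set X := e (1 ⊗ₜ x) with hX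
  have h1 := charpoly_mulLeft_map e x
  rw [← hX] at h1
  set C := (LinearMap.mulLeft K x).charpoly with hC
  have hCm : C.Monic := LinearMap.charpoly_monic _
  have hroot : ∀ μ, X.charpoly.IsRoot μ → aeval μ (minpoly K x) = 0 := by
    intro μ hμ
    have hs := Matrix.mem_spectrum_of_isRoot_charpoly hμ
    have hsub := spectrum.subset_polynomial_aeval X ((minpoly K x).map (algebraMap K _))
      (Set.mem_image_of_mem _ hs)
    have h0 : aeval X ((minpoly K x).map (algebraMap K (AlgebraicClosure K))) = 0 := by
      rw [aeval_map_algebraMap]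
      have : aeval ((e.toAlgHom.restrictScalars K).comp
        (Algebra.TensorProduct.includeRight : D →ₐ[K] _) x) (minpoly K x) = 0 := by
        rw [aeval_algHom_apply, minpoly.aeval, map_zero]
      exact this
    have : Nonempty (Fin n) := ⟨⟨0, hn0⟩⟩
    rw [h0, spectrum.zero_eq] at hsub
    simpa [eval_map_algebraMap] using hsub
  obtain ⟨k, hk⟩ := monic_eq_pow hCm (minpoly.monic hx) (by
    intro q hq hqC
    obtain ⟨μ, hμ⟩ := IsAlgClosed.exists_aeval_eq_zero (AlgebraicClosure K) q
      (degree_pos_of_irreducible hq).ne'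
    have h2 : aeval μ C = 0 := by
      obtain ⟨r, hr⟩ := hqC
      rw [hr, map_mul, hμ, zero_mul]
    have h3 : X.charpoly.IsRoot μ := by
      rw [← eval_map_algebraMap, h1, eval_pow] at h2
      exact pow_eq_zero_iff hn0.ne' |>.1 h2
    have h4 := hroot μ h3
    have h5 := minpoly.dvd K μ h4
    have h6 := minpoly.dvd K μ hμ
    have hmuInt : IsIntegral K μ := Algebra.IsIntegral.isIntegral μ
    exact (((minpoly.irreducible hmuInt).dvd_irreducible_iff_associated hq).1 h6).symm.dvd.trans h5)
    (minpoly.irreducible hx)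
  obtain ⟨c, hc⟩ := minpoly_degree_dvd hn x
  have hd : 0 < (minpoly K x).natDegree := minpoly.natDegree_pos hx
  have hdeg : (minpoly K x).natDegree * k = n ^ 2 := by
    rw [mul_comm, ← natDegree_pow, ← hk, hC, LinearMap.charpoly_natDegree, hn]
  have hkc : k = c * n := by
    have : (minpoly K x).natDegree * k = (minpoly K x).natDegree * (c * n) := by
      rw [hdeg, ← mul_assoc, ← hc, sq]
    exact Nat.eq_of_mul_eq_mul_left hd this
  have hf : X.charpoly = ((minpoly K x) ^ c).map (algebraMap K _) := by
    have h5 : X.charpoly ^ n = (((minpoly K x) ^ c).map (algebraMap K _)) ^ n := by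
      rw [← h1, hk, hkc, pow_mul, Polynomial.map_pow]
    apply Polynomial.eq_of_monic_of_associated (Matrix.charpoly_monic _)
      (((minpoly.monic hx).pow c).map _)
    exact associated_of_dvd_dvd
      ((UniqueFactorizationMonoid.pow_dvd_pow_iff_dvd hn0.ne').1 h5.dvd)
      ((UniqueFactorizationMonoid.pow_dvd_pow_iff_dvd hn0.ne').1 h5.symm.dvd)
  rw [Matrix.det_eq_sign_charpoly_coeff, hf, coeff_map]
  exact ⟨(-1) ^ Fintype.card (Fin n) * ((minpoly K x) ^ c).coeff 0, by simp⟩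

end
end GPD


namespace GPD
set_option linter.unusedSectionVars false

lemma polarization {L V : Type} [Field L] [AddCommGroup V] [Module L V] {n : ℕ}
    (f : MultilinearMap L (fun _ : Fin n => V) L) (g : Fin n → Fin n → V) :
    ∑ σ : Equiv.Perm (Fin n), f (fun k => g k (σ k)) =
      ∑ U : Finset (Fin n), ((-1 : ℤ) ^ U.card : ℤ) • f (fun k => ∑ i ∈ Uᶜ, g k i) := by
  classical
  have h1 : ∀ U : Finset (Fin n), f (fun k => ∑ i ∈ Uᶜ, g k i) =
      ∑ r : Fin n → Fin n, if U ⊆ (Finset.univ.image r)ᶜ then f (fun k => g k (r k)) else 0 := by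
    intro U
    rw [MultilinearMap.map_sum_finset, ← Finset.sum_filter]
    apply Finset.sum_congr _ (fun _ _ => rfl)
    ext r
    simp only [Fintype.mem_piFinset, Finset.mem_filter, Finset.mem_univ, true_and,
      Finset.mem_compl, Finset.subset_iff, Finset.mem_image, not_exists]
    exact ⟨fun h x hx k hk => h k (hk ▸ hx), fun h k hk => h hk k rfl⟩
  simp_rw [h1, Finset.smul_sum]
  rw [Finset.sum_comm]
  have h2 : ∀ r : Fin n → Fin n, (∑ U : Finset (Fin n), ((-1 : ℤ) ^ U.card : ℤ) •
      (if U ⊆ (Finset.univ.image r)ᶜ then f (fun k => g k (r k)) else 0)) =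
      if Function.Surjective r then f (fun k => g k (r k)) else 0 := by
    intro r
    have h3 : (∑ U : Finset (Fin n), ((-1 : ℤ) ^ U.card : ℤ) •
      (if U ⊆ (Finset.univ.image r)ᶜ then f (fun k => g k (r k)) else 0)) =
      (∑ U ∈ ((Finset.univ.image r)ᶜ).powerset, ((-1 : ℤ) ^ U.card : ℤ)) •
        f (fun k => g k (r k)) := by
      rw [Finset.sum_smul]
      simp_rw [smul_ite, smul_zero]
      rw [← Finset.sum_filter]
      apply Finset.sum_congr _ (fun _ _ => rfl)
      ext U
      simp
    rw [h3, Finset.sum_powerset_neg_one_pow_card]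
    have h4 : (Finset.univ.image r)ᶜ = ∅ ↔ Function.Surjective r := by
      rw [Finset.compl_eq_empty_iff, Finset.eq_univ_iff_forall]
      simp [Function.Surjective]
    simp only [h4]
    split_ifs <;> simp
  simp_rw [h2]
  rw [← Finset.sum_filter]
  refine Finset.sum_bij (fun σ _ => ⇑σ) ?_ ?_ ?_ ?_
  · intro σ _
    simpa using σ.surjective
  · intro σ _ τ _ h
    exact DFunLike.coe_injective h
  · intro r hr
    have hr' : Function.Surjective r := by simpa using hr
    exact ⟨Equiv.ofBijective r (Finite.surjective_iff_bijective.1 hr'), Finset.mem_univ _, rfl⟩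
  · intro σ _
    rfl

section
variable {K L D : Type} [Field K] [Field L] [Algebra K L] [Ring D] [Algebra K D]
  [FiniteDimensional K D] {n : ℕ} (ρ : D →ₐ[K] Matrix (Fin n) (Fin n) L)

/-- determinant with `k`-th row the `j k`-th column of `ρ (y k)`. -/
noncomputable def Gd (j : Fin n → Fin n) (y : Fin n → D) : L :=
  Matrix.detRowAlternating (fun k l => ρ (y k) l (j k))

/-- The space of multilinear forms in the span of the determinants. -/
noncomputable def MM : Submodule K (MultilinearMap K (fun _ : Fin n => D) K) where
  carrier := {F | (fun y => algebraMap K L (F y)) ∈ Submodule.span L (Set.range (Gd ρ))}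
  zero_mem' := by
    simp only [Set.mem_ofPred_eq, zero_apply, map_zero]
    exact Submodule.zero_mem _
  add_mem' := by
    intro a b ha hb
    simp only [Set.mem_ofPred_eq, add_apply, map_add]
    exact Submodule.add_mem _ ha hb
  smul_mem' := by
    intro c a ha
    simp only [Set.mem_ofPred_eq, smul_apply, smul_eq_mul, map_mul]
    exact Submodule.smul_mem _ (algebraMap K L c) ha

lemma mem_MM {F : MultilinearMap K (fun _ : Fin n => D) K} : F ∈ MM ρ ↔
    (fun y => algebraMap K L (F y)) ∈ Submodule.span L (Set.range (Gd ρ)) := Iff.rfl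

lemma indep_ext {X ι V : Type} [AddCommGroup V] [Module K V] [Finite ι] (ev : X → V →ₗ[K] K)
    (hsep : ∀ v, (∀ x, ev x v = 0) → v = 0) (v : ι → V) (h : LinearIndependent K v) :
    LinearIndependent L (fun i x => algebraMap K L (ev x (v i))) := by
  classical
  have := Fintype.ofFinite ι
  rw [Fintype.linearIndependent_iff] at h ⊢
  intro c hc i
  rw [← Module.forall_dual_apply_eq_zero_iff K]
  intro φ
  refine h (fun i => φ (c i)) (hsep _ ?_) i
  intro x
  have h1 := congrArg φ (congrFun hc x)
  simp only [Finset.sum_apply, Pi.smul_apply, smul_eq_mul, Pi.zero_apply, map_zero, map_sum,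
    map_smul] at h1 ⊢
  rw [← h1]
  refine Finset.sum_congr rfl fun i _ => ?_
  rw [mul_comm (c i), ← Algebra.smul_def, map_smul, smul_eq_mul, mul_comm]

/-- evaluation -/
noncomputable def evMM (y : Fin n → D) : MM ρ →ₗ[K] K where
  toFun F := F.1 y
  map_add' _ _ := rfl
  map_smul' _ _ := rfl

lemma finrank_MM : Module.finrank K (MM ρ) ≤ n ^ n := by
  have h : Module.rank K (MM ρ) ≤ (n ^ n : ℕ) := by
    apply rank_le
    intro s hs
    have hfin : FiniteDimensional L (Submodule.span L (Set.range (Gd ρ))) :=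
      FiniteDimensional.span_of_finite L (Set.finite_range _)
    have hW : Module.finrank L (Submodule.span L (Set.range (Gd ρ))) ≤ n ^ n := by
      refine (finrank_range_le_card (Gd ρ)).trans ?_
      simp
    have hsep : ∀ v : MM ρ, (∀ y, evMM ρ y v = 0) → v = 0 := by
      intro v hv
      apply Subtype.ext
      apply MultilinearMap.ext
      intro y
      exact hv y
    have h1 := indep_ext (K := K) (L := L) (V := MM ρ) (evMM ρ) hsep (fun i : s => (i : MM ρ)) hs
    have h2 : LinearIndependent L (fun i : s => (⟨fun y => algebraMap K L (evMM ρ y (i : MM ρ)),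
        (i : MM ρ).2⟩ : Submodule.span L (Set.range (Gd ρ)))) := by
      apply LinearIndependent.of_comp (Submodule.span L (Set.range (Gd ρ))).subtype
      exact h1
    have h3 := h2.fintype_card_le_finrank
    rw [Fintype.card_coe] at h3
    exact h3.trans hW
  exact Module.finrank_le_of_rank_le h

/-- multiplication in the `i`-th variable. -/
noncomputable def act0 (i : Fin n) (d : D) (F : MultilinearMap K (fun _ : Fin n => D) K) :
    MultilinearMap K (fun _ : Fin n => D) K :=
  F.compLinearMap (fun k => if k = i then LinearMap.mulRight K d else LinearMap.id)

lemma act0_apply (i : Fin n) (d : D) (F : MultilinearMap K (fun _ : Fin n => D) K)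
    (y : Fin n → D) : act0 i d F y = F (Function.update y i (y i * d)) := by
  rw [act0, MultilinearMap.compLinearMap_apply]
  congr 1
  ext k
  by_cases h : k = i
  · subst h; simp
  · simp [h]

lemma Gd_act (i : Fin n) (d : D) (j : Fin n → Fin n) (y : Fin n → D) :
    Gd ρ j (Function.update y i (y i * d)) =
      ∑ m, ρ d m (j i) * Gd ρ (Function.update j i m) y := by
  unfold Gd
  have h1 : (fun k l => ρ (Function.update y i (y i * d) k) l (j k)) =
      Function.update (fun k l => ρ (y k) l (j k)) i
        (∑ m, ρ d m (j i) • (fun l => ρ (y i) l m)) := by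
    ext k l
    by_cases h : k = i
    · subst h
      simp [Matrix.mul_apply, mul_comm]
    · simp [h]
  rw [h1, AlternatingMap.map_update_sum]
  refine Finset.sum_congr rfl fun m _ => ?_
  rw [AlternatingMap.map_update_smul, smul_eq_mul]
  congr 2
  ext k l
  by_cases h : k = i
  · subst h; simp
  · simp [h]

lemma act0_mem (i : Fin n) (d : D) {F : MultilinearMap K (fun _ : Fin n => D) K}
    (hF : F ∈ MM ρ) : act0 i d F ∈ MM ρ := by
  rw [mem_MM] at *
  simp_rw [act0_apply]
  have : ∀ G ∈ Submodule.span L (Set.range (Gd ρ)),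
      (fun y : Fin n → D => G (Function.update y i (y i * d))) ∈
        Submodule.span L (Set.range (Gd ρ)) := by
    intro G hG
    induction hG using Submodule.span_induction with
    | mem G hG =>
      obtain ⟨j, rfl⟩ := hG
      have : (fun y : Fin n → D => Gd ρ j (Function.update y i (y i * d))) =
        ∑ m, ρ d m (j i) • Gd ρ (Function.update j i m) := by
        ext y
        rw [Gd_act]
        simp
      rw [this]
      exact Submodule.sum_mem _ fun m _ => Submodule.smul_mem _ _ (Submodule.subset_span ⟨_, rfl⟩)
    | zero => exact Submodule.zero_mem _
    | add a b _ _ ha hb => exact Submodule.add_mem _ ha hb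
    | smul c a _ ha => exact Submodule.smul_mem _ c ha
  exact this _ hF

/-- the action of `D` on the `i`-th variable. -/
noncomputable def act (i : Fin n) : D →ₐ[K] Module.End K (MM ρ) :=
  AlgHom.ofLinearMap
    { toFun := fun d =>
        { toFun := fun F => ⟨act0 i d F.1, act0_mem ρ i d F.2⟩
          map_add' := by
            intro a b
            apply Subtype.ext; ext y
            simp [act0_apply]
          map_smul' := by
            intro c a
            apply Subtype.ext; ext y
            simp [act0_apply] }
      map_add' := by
        intro d d'
        apply LinearMap.ext; intro F
        apply Subtype.ext; ext y
        simp [act0_apply, mul_add]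
      map_smul' := by
        intro c d
        apply LinearMap.ext; intro F
        apply Subtype.ext; ext y
        simp [act0_apply] }
    (by
      apply LinearMap.ext; intro F
      apply Subtype.ext; ext y
      simp [act0_apply])
    (by
      intro d d'
      apply LinearMap.ext; intro F
      apply Subtype.ext; ext y
      simp [act0_apply, mul_assoc])

lemma act_commute {i j : Fin n} (hij : i ≠ j) (d d' : D) : Commute (act ρ i d) (act ρ j d') := by
  apply LinearMap.ext; intro F
  apply Subtype.ext; ext y
  simp [act, act0_apply, hij, hij.symm, Function.update_comm hij]

end
end GPD


namespace GPD
set_option linter.unusedSectionVars false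

section
variable {L : Type} [Field L] {n : ℕ}

/-- one term of the polarized determinant -/
noncomputable def PhiT (σ : Equiv.Perm (Fin n)) :
    MultilinearMap L (fun _ : Fin n => Matrix (Fin n) (Fin n) L) L :=
  ((Matrix.detRowAlternating (R := L) (n := Fin n)).toMultilinearMap.compLinearMap
    (fun k => (LinearMap.proj k).comp
      (Matrix.transposeLinearEquiv (Fin n) (Fin n) L L).toLinearMap)).domDomCongr σ

lemma PhiT_apply (σ : Equiv.Perm (Fin n)) (X : Fin n → Matrix (Fin n) (Fin n) L) :
    PhiT σ X = Matrix.detRowAlternating (fun k l => X (σ k) l k) := rfl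

/-- polarized determinant -/
noncomputable def Phi : MultilinearMap L (fun _ : Fin n => Matrix (Fin n) (Fin n) L) L :=
  ∑ σ : Equiv.Perm (Fin n), PhiT σ

lemma Phi_apply (X : Fin n → Matrix (Fin n) (Fin n) L) :
    Phi X = ∑ σ : Equiv.Perm (Fin n), Matrix.detRowAlternating (fun k l => X (σ k) l k) := by
  rw [Phi, sum_apply]
  rfl

lemma Phi_diag : Phi (fun i : Fin n => Matrix.single i i (1 : L)) = 1 := by
  rw [Phi_apply, Finset.sum_eq_single 1]
  · have : (fun k l => Matrix.single ((1 : Equiv.Perm (Fin n)) k) ((1 : Equiv.Perm (Fin n)) k)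
        (1 : L) l k) = (1 : Matrix (Fin n) (Fin n) L) := by
      ext k l
      simp [Matrix.single_apply, Matrix.one_apply]
    rw [this]
    exact Matrix.det_one
  · intro σ _ hσ
    obtain ⟨k, hk⟩ : ∃ k, σ k ≠ k := by
      by_contra h
      push Not at h
      exact hσ (Equiv.ext h)
    apply AlternatingMap.map_coord_zero _ k
    ext l
    simp [Matrix.single_apply, hk]
  · simp

lemma Phi_det (X : Fin n → Matrix (Fin n) (Fin n) L) : Phi X =
    ∑ U : Finset (Fin n), ((-1 : ℤ) ^ U.card : ℤ) • (∑ i ∈ Uᶜ, X i).det := by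
  rw [Phi_apply]
  refine (polarization (Matrix.detRowAlternating (R := L) (n := Fin n)).toMultilinearMap
    (fun k i l => X i l k)).trans ?_
  refine Finset.sum_congr rfl fun U _ => ?_
  congr 1
  rw [← Matrix.det_transpose]
  change Matrix.det _ = Matrix.det _
  congr 1
  ext k l
  simp [Matrix.sum_apply]

end

section
variable {K L D : Type} [Field K] [Field L] [Algebra K L] [Ring D] [Algebra K D]
  [FiniteDimensional K D] {n : ℕ}

lemma nontrivial_MM (e : L ⊗[K] D ≃ₐ[L] Matrix (Fin n) (Fin n) L) 
    (ρ : D →ₐ[K] Matrix (Fin n) (Fin n) L) (hρ : ∀ x, ρ x = e (1 ⊗ₜ x))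
    (hrat : ∀ x, ∃ k : K, algebraMap K L k = (ρ x).det) : Nontrivial (MM ρ) := by
  let ΦK : MultilinearMap K (fun _ : Fin n => D) L :=
    (Phi.restrictScalars K).compLinearMap (fun _ => ρ.toLinearMap)
  have hΦ : ∀ y, ΦK y = Phi (fun i => ρ (y i)) := fun _ => rfl
  have hr : ∀ y, ΦK y ∈ LinearMap.range (Algebra.linearMap K L) := by
    intro y
    rw [hΦ, Phi_det]
    refine Submodule.sum_mem _ fun U _ => ?_
    apply Submodule.smul_of_tower_mem
    rw [← map_sum]
    obtain ⟨k, hk⟩ := hrat (∑ i ∈ Uᶜ, y i)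
    exact ⟨k, hk⟩
  have inj : Function.Injective (Algebra.linearMap K L) := (algebraMap K L).injective
  let q := LinearEquiv.ofInjective (Algebra.linearMap K L) inj
  let F : MultilinearMap K (fun _ : Fin n => D) K :=
    q.symm.toLinearMap.compMultilinearMap (ΦK.codRestrict _ hr)
  have hF : ∀ y, algebraMap K L (F y) = Phi (fun i => ρ (y i)) := by
    intro y
    have h1 : q (F y) = ⟨ΦK y, hr y⟩ := q.apply_symm_apply _
    exact congrArg Subtype.val h1
  have hmem : F ∈ MM ρ := by
    rw [mem_MM]
    have : (fun y => algebraMap K L (F y)) = ∑ σ : Equiv.Perm (Fin n), 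
        ((Equiv.Perm.sign σ : ℤ) : L) • Gd ρ (⇑σ⁻¹) := by
      ext y
      rw [hF, Phi_apply, Finset.sum_apply]
      refine Finset.sum_congr rfl fun σ _ => ?_
      have := (Matrix.detRowAlternating (R := L) (n := Fin n)).map_perm
        (fun k l => ρ (y k) l (σ⁻¹ k)) σ
      rw [Pi.smul_apply, Gd, smul_eq_mul]
      refine Eq.trans ?_ (this.trans ?_)
      · congr 1
        ext k l
        simp
      · rw [Units.smul_def, zsmul_eq_mul]
    rw [this]
    exact Submodule.sum_mem _ fun σ _ => Submodule.smul_mem _ _ (Submodule.subset_span ⟨_, rfl⟩)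
  refine ⟨⟨F, hmem⟩, 0, fun h => ?_⟩
  have h0 : F = 0 := congrArg Subtype.val h
  let bL := ((Module.finBasis K D).baseChange L).map e.toLinearEquiv
  have hz : (Phi : MultilinearMap L (fun _ : Fin n => Matrix (Fin n) (Fin n) L) L) = 0 := by
    refine Module.Basis.ext_multilinear (fun _ => bL) fun v => ?_
    have h1 := hF (fun i => Module.finBasis K D (v i))
    rw [h0] at h1
    simp only [zero_apply, map_zero, hρ] at h1 ⊢
    rw [h1]
    congr 1
    ext i : 1
    simp [bL]
  have := Phi_diag (L := L) (n := n)
  rw [hz] at this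
  simp at this

end

section
variable {K : Type} [Field K]

lemma pow_hom {A R : Type} [Ring A] [Algebra K A] [Algebra.IsCentral K A] [IsSimpleRing A]
    [FiniteDimensional K A] [Ring R] [Algebra K R] (k : ℕ) (φ : Fin k → (A →ₐ[K] R)) 
    (hc : ∀ i j, i ≠ j → ∀ a b, Commute (φ i a) (φ j b)) :
    ∃ (T : Type) (_ : Ring T) (_ : Algebra K T) (_ : Algebra.IsCentral K T)
    (_ : IsSimpleRing T) (_ : FiniteDimensional K T), cls K T = cls K A ^ k ∧
      Module.finrank K T = Module.finrank K A ^ k ∧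
      ∃ ψ : T →ₐ[K] R, ∀ r, (∀ i a, Commute r (φ i a)) → ∀ t, Commute r (ψ t) := by
  induction k with
  | zero =>
    refine ⟨K, inferInstance, inferInstance, inferInstance, inferInstance, inferInstance, ?_, ?_,
      Algebra.ofId K R, ?_⟩
    · rw [cls_one, pow_zero]
    · simp
    · intro r _ t
      exact (Algebra.commutes t r).symm
  | succ k ih =>
    obtain ⟨T, _, _, _, _, _, h1, h2, ψ, hψ⟩ := ih (fun i => φ i.succ) (by
      intro i j hij
      exact hc _ _ (by simpa using hij))
    refine ⟨A ⊗[K] T, inferInstance, inferInstance, inferInstance, inferInstance, inferInstance,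
      ?_, ?_, Algebra.TensorProduct.lift (φ 0) ψ ?_, ?_⟩
    · rw [cls_mul, h1, pow_succ']
    · rw [Module.finrank_tensorProduct, h2, pow_succ']
    · intro a t
      exact hψ _ (fun i b => hc _ _ (Fin.succ_ne_zero i).symm _ _) t
    · intro r hr t
      induction t with
      | zero => simp
      | add x y hx hy => rw [map_add]; exact hx.add_right hy
      | tmul a t =>
        rw [Algebra.TensorProduct.lift_tmul]
        exact (hr 0 a).mul_right (hψ r (fun i b => hr _ b) t)

lemma torsion_abs {D V : Type} [Ring D] [Algebra K D]
    [FiniteDimensional K D] [Algebra.IsCentral K D] [IsSimpleRing D] [AddCommGroup V]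
    [Module K V] [FiniteDimensional K V] [Nontrivial V] {m : ℕ}
    (φ : Fin m → (D →ₐ[K] Module.End K V))
    (hc : ∀ i j, i ≠ j → ∀ a b, Commute (φ i a) (φ j b))
    (hV : Module.finrank K V ≤ m ^ m) (hn : Module.finrank K D = m ^ 2) :
    cls K D ^ m = 1 := by
  obtain ⟨T, _, _, _, _, _, h1, h2, ψ, -⟩ := pow_hom (K := K) (A := D)
    (R := Module.End K V) m φ hc
  obtain ⟨f⟩ := equiv_end ψ (by
    rw [h2, hn, ← pow_mul, mul_comm, pow_mul]
    exact Nat.pow_le_pow_left hV 2)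
  rw [← h1]
  exact cls_end f

lemma torsion_aux {L D : Type} [Field L] [Algebra K L] [Ring D] [Algebra K D]
    [FiniteDimensional K D] [Algebra.IsCentral K D] [IsSimpleRing D] {m : ℕ}
    (ρ : D →ₐ[K] Matrix (Fin m) (Fin m) L) (hn : Module.finrank K D = m ^ 2)
    (hnt : Nontrivial (MM ρ)) : cls K D ^ m = 1 := by
  have hc := fun (i j : Fin m) (hij : i ≠ j) a b => act_commute ρ hij a b
  exact torsion_abs (K := K) (D := D) (V := MM ρ) (m := m) (act ρ) hc (finrank_MM ρ) hn

lemma torsion_div {D : Type} [DivisionRing D] [Algebra K D] [Algebra.IsCentral K D]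
    [FiniteDimensional K D] {n : ℕ} (hn : Module.finrank K D = n ^ 2) : cls K D ^ n = 1 := by
  obtain ⟨m, hm, hm2, ⟨e⟩⟩ := split_closure (K := K) D
  have hmn : m = n := by
    rw [hn] at hm2
    exact (Nat.pow_left_injective (n := 2) two_ne_zero hm2).symm
  subst hmn
  let ρ : D →ₐ[K] Matrix (Fin m) (Fin m) (AlgebraicClosure K) :=
    (e.toAlgHom.restrictScalars K).comp Algebra.TensorProduct.includeRight
  have hρ : ∀ x, ρ x = e (1 ⊗ₜ x) := fun _ => rfl
  exact torsion_aux ρ hn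
    (nontrivial_MM e ρ hρ (fun x => det_rational (Nat.pos_of_ne_zero hm) hn e x))

lemma torsion {A : Type} [Ring A] [Algebra K A] [Algebra.IsCentral K A] [IsSimpleRing A]
    [FiniteDimensional K A] {n : ℕ} (hn : Module.finrank K A = n ^ 2) : cls K A ^ n = 1 := by
  obtain ⟨r, hr, E, _, _, _, ⟨e⟩, -⟩ := wedd K A
  have := Algebra.IsCentral.of_algEquiv K _ _ e
  have : Algebra.IsCentral K E := central_of_matrix (r := r)
  obtain ⟨c, hc, hEc, -⟩ := split_closure (K := K) E
  have h1 := e.toLinearEquiv.finrank_eq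
  rw [hn, Module.finrank_matrix, hEc] at h1
  simp only [Fintype.card_fin] at h1
  have h2 : n = c * r := by
    have : n ^ 2 = (c * r) ^ 2 := by rw [h1]; ring
    exact Nat.pow_left_injective (n := 2) two_ne_zero this
  rw [cls_of_matrix e, h2, pow_mul, torsion_div hEc, one_pow]

end
end GPD

namespace GPD
section
variable {K : Type} [Field K]

lemma res_pow_of_embed {D : Type} [DivisionRing D] [Algebra K D] [Algebra.IsCentral K D]
    [FiniteDimensional K D] {P : Type} [Field P] [Algebra K P] (j : P →ₐ[K] D) {n₁ n₂ : ℕ}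
    (h1 : 0 < n₁)
    (hn : Module.finrank K D = (n₁ * n₂) ^ 2) (hP : Module.finrank K P = n₁) :
    res P (cls K D) ^ n₂ = 1 := by
  obtain ⟨s, c, E, _, _, _, _, hsc, hs, hE, hcl⟩ := subfield_index j hn
  rw [← res_cls, cls_inv, map_inv] at hcl
  have hc : c ∣ n₂ := by
    obtain ⟨t, rfl⟩ := hs
    rw [hP, mul_assoc] at hsc
    exact ⟨t, by rw [← Nat.eq_of_mul_eq_mul_left h1 hsc, mul_comm]⟩
  obtain ⟨t, rfl⟩ := hc
  rw [← inv_inj, ← inv_pow, hcl, pow_mul, torsion_div hE, one_pow, inv_one]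

lemma lemA {E₁ E₂ D : Type} [DivisionRing D] [Algebra K D] [Algebra.IsCentral K D]
    [FiniteDimensional K D] [DivisionRing E₁] [Algebra K E₁] [Algebra.IsCentral K E₁]
    [FiniteDimensional K E₁] [DivisionRing E₂] [Algebra K E₂] [Algebra.IsCentral K E₂]
    [FiniteDimensional K E₂] {P : Type} [Field P] [Algebra K P] (j : P →ₐ[K] D) {n₁ n₂ : ℕ}
    (h1 : 0 < n₁) (hcop : Nat.Coprime n₁ n₂)
    (hn1 : Module.finrank K E₁ = n₁ ^ 2) (hn2 : Module.finrank K E₂ = n₂ ^ 2)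
    (e : D ≃ₐ[K] (E₁ ⊗[K] E₂)) (hP : Module.finrank K P = n₁) :
    Nonempty (P →ₐ[K] E₁) := by
  have hn : Module.finrank K D = (n₁ * n₂) ^ 2 := by
    rw [e.toLinearEquiv.finrank_eq, Module.finrank_tensorProduct, hn1, hn2, mul_pow]
  have h2 := res_pow_of_embed j h1 hn hP
  rw [cls_congr e, cls_mul, map_mul, mul_pow, ← map_pow _ (cls K E₂), torsion_div hn2, map_one,
    mul_one] at h2
  have h3 : res P (cls K E₁) ^ n₁ = 1 := by rw [← map_pow, torsion_div hn1, map_one]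
  have h4 : res P (cls K E₁) = 1 := by
    have := Nat.dvd_gcd (orderOf_dvd_of_pow_eq_one h3) (orderOf_dvd_of_pow_eq_one h2)
    rw [hcop] at this
    exact orderOf_eq_one_iff.1 (Nat.dvd_one.1 this)
  exact split_embed P h1 hn1 hP h4

lemma field_tensor {X₁ X₂ X : Type} [DivisionRing X] [Algebra K X]
    [Ring X₁] [Algebra K X₁] [Ring X₂] [Algebra K X₂] (e : X ≃ₐ[K] (X₁ ⊗[K] X₂))
    {P Q : Type} [Field P] [Algebra K P] [Field Q] [Algebra K Q] [Nontrivial X₁] [Nontrivial X₂]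
    [FiniteDimensional K P] [FiniteDimensional K Q]
    (f : P →ₐ[K] X₁) (g : Q →ₐ[K] X₂) :
    ∃ (F : Type) (_ : Field F) (_ : Algebra K F),
      Module.finrank K F = Module.finrank K P * Module.finrank K Q ∧
      Nonempty (P →ₐ[K] F) ∧ Nonempty (Q →ₐ[K] F) ∧ Nonempty (F →ₐ[K] X) := by
  have hf : Function.Injective f := RingHom.injective f.toRingHom
  have hg : Function.Injective g := RingHom.injective g.toRingHom
  let φ : P ⊗[K] Q →ₐ[K] X := e.symm.toAlgHom.comp (Algebra.TensorProduct.map f g)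
  have hφ : Function.Injective φ := by
    refine e.symm.injective.comp ?_
    have := TensorProduct.map_injective_of_flat_flat f.toLinearMap g.toLinearMap hf hg
    exact this
  have : IsDomain (P ⊗[K] Q) := hφ.isDomain φ.toRingHom
  let fS : Field (P ⊗[K] Q) := { fieldOfFiniteDimensional K (P ⊗[K] Q) with }
  exact ⟨P ⊗[K] Q, fS, inferInstance, Module.finrank_tensorProduct,
    ⟨Algebra.TensorProduct.includeLeft⟩, ⟨Algebra.TensorProduct.includeRight⟩, ⟨φ⟩⟩

lemma same_one {X X₁ X₂ Y Y₁ Y₂ : Type} [DivisionRing X] [Algebra K X]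
    [DivisionRing X₁] [Algebra K X₁]
    [DivisionRing X₂] [Algebra K X₂] [Algebra.IsCentral K X₂]
    [FiniteDimensional K X₂]
    [DivisionRing Y] [Algebra K Y] [Algebra.IsCentral K Y] [FiniteDimensional K Y]
    [DivisionRing Y₁] [Algebra K Y₁] [Algebra.IsCentral K Y₁] [FiniteDimensional K Y₁]
    [DivisionRing Y₂] [Algebra K Y₂] [Algebra.IsCentral K Y₂] [FiniteDimensional K Y₂]
    {n₁ n₂ : ℕ} (h1 : 0 < n₁) (h2 : 0 < n₂) (hcop : Nat.Coprime n₁ n₂)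
    (hX2 : Module.finrank K X₂ = n₂ ^ 2)
    (hY1 : Module.finrank K Y₁ = n₁ ^ 2) (hY2 : Module.finrank K Y₂ = n₂ ^ 2)
    (eX : X ≃ₐ[K] (X₁ ⊗[K] X₂)) (eY : Y ≃ₐ[K] (Y₁ ⊗[K] Y₂))
    (hXY : ∀ (P : Type) [Field P] [Algebra K P], Module.finrank K P = n₁ * n₂ →
      Nonempty (P →ₐ[K] X) → Nonempty (P →ₐ[K] Y))
    (P : Type) [Field P] [Algebra K P] (hP : Module.finrank K P = n₁)
    (hPX : Nonempty (P →ₐ[K] X₁)) : Nonempty (P →ₐ[K] Y₁) := by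
  obtain ⟨f⟩ := hPX
  obtain ⟨Q, _, _, hQ, ⟨g⟩⟩ := exists_max_subfield hX2
  have : FiniteDimensional K P := Module.finite_of_finrank_pos (by omega)
  have : FiniteDimensional K Q := Module.finite_of_finrank_pos (by omega)
  obtain ⟨F, _, _, hF, ⟨i⟩, -, hFX⟩ := field_tensor eX f g
  obtain ⟨k⟩ := hXY F (by rw [hF, hP, hQ]) hFX
  exact lemA (k.comp i) h1 hcop hY1 hY2 eY hP

/-- the decomposition of the algebra. -/
lemma decomp {D : Type} [DivisionRing D] [Algebra K D] [Algebra.IsCentral K D]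
    [FiniteDimensional K D] {n₁ n₂ : ℕ} (h1 : 0 < n₁) (h2 : 0 < n₂) (hcop : Nat.Coprime n₁ n₂)
    (hn : Module.finrank K D = (n₁ * n₂) ^ 2)
    {P Q : Type} [Field P] [Algebra K P] [Field Q] [Algebra K Q]
    (hP : Module.finrank K P = n₁) (hQ : Module.finrank K Q = n₂)
    (f : P →ₐ[K] D) (g : Q →ₐ[K] D) :
    ∃ (A : Type) (_ : DivisionRing A) (_ : Algebra K A) (_ : Algebra.IsCentral K A)
      (_ : FiniteDimensional K A)
      (B : Type) (_ : DivisionRing B) (_ : Algebra K B) (_ : Algebra.IsCentral K B)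
      (_ : FiniteDimensional K B), Module.finrank K A = n₁ ^ 2 ∧ Module.finrank K B = n₂ ^ 2 ∧
      Nonempty (D ≃ₐ[K] (A ⊗[K] B)) := by
  have : FiniteDimensional K P := Module.finite_of_finrank_pos (by omega)
  have : FiniteDimensional K Q := Module.finite_of_finrank_pos (by omega)
  have rP := res_pow_of_embed f h1 hn hP
  have rQ := res_pow_of_embed g h2 (by rw [hn, mul_comm]) hQ
  have bez : (n₂ : ℤ) * n₁.gcdB n₂ + n₁ * n₁.gcdA n₂ = 1 := by
    have := Nat.gcd_eq_gcd_ab n₁ n₂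
    rw [hcop] at this
    push_cast at this
    linarith
  obtain ⟨A, _, _, _, _, hA⟩ := exists_division (cls K D ^ ((n₂ : ℤ) * n₁.gcdB n₂))
  obtain ⟨B, _, _, _, _, hB⟩ := exists_division (cls K D ^ ((n₁ : ℤ) * n₁.gcdA n₂))
  have hAB : cls K A * cls K B = cls K D := by rw [← hA, ← hB, ← zpow_add, bez, zpow_one]
  obtain ⟨a, ha, hAa, -⟩ := split_closure (K := K) A
  obtain ⟨b, hb, hBb, -⟩ := split_closure (K := K) B
  have da : a ∣ n₁ := by
    rw [← hP]
    refine split_dvd P hAa ?_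
    rw [← res_cls, ← hA, map_zpow, zpow_mul, zpow_natCast, rP, one_zpow]
  have db : b ∣ n₂ := by
    rw [← hQ]
    refine split_dvd Q hBb ?_
    rw [← res_cls, ← hB, map_zpow, zpow_mul, zpow_natCast, rQ, one_zpow]
  have hone : cls K (Dᵐᵒᵖ ⊗[K] (A ⊗[K] B)) = 1 := by
    rw [cls_mul, cls_mul, hAB, cls_inv, inv_mul_cancel]
  obtain ⟨m, hm, ⟨e⟩⟩ := split_of_cls_one hone
  have hDop : Module.finrank K Dᵐᵒᵖ = (n₁ * n₂) ^ 2 := by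
    rw [← hn, (MulOpposite.opLinearEquiv K (M := D)).finrank_eq]
  have hm2 : m = (n₁ * n₂) * (a * b) := by
    have h := e.toLinearEquiv.finrank_eq
    rw [Module.finrank_tensorProduct, Module.finrank_tensorProduct, hDop, hAa, hBb,
      Module.finrank_matrix] at h
    simp only [Fintype.card_fin, Module.finrank_self, mul_one] at h
    have : m ^ 2 = ((n₁ * n₂) * (a * b)) ^ 2 := by rw [sq m, ← h]; ring
    exact Nat.pow_left_injective (n := 2) two_ne_zero this
  let Ψ : Dᵐᵒᵖ ⊗[K] (A ⊗[K] B) →ₐ[K] Module.End K (Fin m → K) :=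
    (Matrix.toLinAlgEquiv' (R := K) (n := Fin m)).toAlgHom.comp e.toAlgHom
  let ψ : Dᵐᵒᵖ →ₐ[K] Module.End K (Fin m → K) := Ψ.comp Algebra.TensorProduct.includeLeft
  let χ : A ⊗[K] B →ₐ[K] Module.End K (Fin m → K) := Ψ.comp Algebra.TensorProduct.includeRight
  have hpos : 0 < n₁ * n₂ := Nat.mul_pos h1 h2
  have hdv : n₁ * n₂ ∣ a * b := by
    have := dvd_of_hom ψ
    rw [hDop, Module.finrank_fin_fun, hm2, sq] at this
    exact Nat.dvd_of_mul_dvd_mul_left hpos this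
  have hle := Nat.le_of_dvd (Nat.mul_pos (Nat.pos_of_ne_zero ha) (Nat.pos_of_ne_zero hb)) hdv
  have hla := Nat.le_of_dvd h1 da
  have hlb := Nat.le_of_dvd h2 db
  have ea : a = n₁ := by nlinarith
  have eb : b = n₂ := by nlinarith
  subst ea eb
  obtain ⟨F⟩ := embed_transfer ψ χ (by
    intro x r
    change Commute (Ψ (x ⊗ₜ 1)) (Ψ (1 ⊗ₜ r))
    rw [Commute, SemiconjBy, ← map_mul, ← map_mul]
    simp) (by rw [Module.finrank_fin_fun, hm2, hDop, sq])
  let G : A ⊗[K] B →ₐ[K] D := (AlgEquiv.opOp K D).symm.toAlgHom.comp F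
  have hG : Function.Injective G := RingHom.injective G.toRingHom
  have hG2 : Function.Bijective G := by
    refine ⟨hG, ?_⟩
    have : Module.finrank K (A ⊗[K] B) = Module.finrank K D := by
      rw [Module.finrank_tensorProduct, hAa, hBb, hn]; ring
    exact (LinearMap.injective_iff_surjective_of_finrank_eq_finrank
      (f := G.toLinearMap) this).1 hG
  exact ⟨A, inferInstance, inferInstance, inferInstance, inferInstance,
    B, inferInstance, inferInstance, inferInstance, inferInstance, hAa, hBb,
    ⟨(AlgEquiv.ofBijective G hG2).symm⟩⟩

end
end GPD

namespace GPD
section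
variable {K : Type} [Field K]

lemma transport {A : Type} [DivisionRing A] [Algebra K A] [Algebra.IsCentral K A]
    [FiniteDimensional K A] {m : ℕ} (hm : Module.finrank K A = m) :
    ∃ S : Subalgebra K (Matrix (Fin m) (Fin m) K), IsDivisionSubalgebra S ∧
      Subalgebra.center K S = ⊥ ∧ Nonempty (A ≃ₐ[K] S) := by
  let b : Module.Basis (Fin m) K A := Module.finBasisOfFinrankEq K A hm
  let e := AlgEquiv.ofInjective (Algebra.leftMulMatrix b) (Algebra.leftMulMatrix_injective b)
  refine ⟨(Algebra.leftMulMatrix b).range, ?_, ?_, ⟨e⟩⟩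
  · intro x hx
    have hx' : e.symm x ≠ 0 := by simpa using hx
    refine ⟨e (e.symm x)⁻¹, ?_, ?_⟩
    · apply e.symm.injective
      rw [map_mul, e.symm_apply_apply, mul_inv_cancel₀ hx', map_one]
    · apply e.symm.injective
      rw [map_mul, e.symm_apply_apply, inv_mul_cancel₀ hx', map_one]
  · have := Algebra.IsCentral.of_algEquiv K _ _ e
    exact Algebra.IsCentral.center_eq_bot K _

lemma same_of {A S D : Type} [Ring A] [Algebra K A] [Ring S] [Algebra K S] [Ring D] [Algebra K D]
    {n : ℕ} (e : A ≃ₐ[K] S) (h : SameMaxSubfields K n A D) : SameMaxSubfields K n S D := by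
  intro P _ _ hP
  rw [← h P hP]
  exact ⟨fun ⟨f⟩ => ⟨e.symm.toAlgHom.comp f⟩, fun ⟨f⟩ => ⟨e.toAlgHom.comp f⟩⟩

end
end GPD

/-- if `D = D₁ ⊗ D₂` is a central division algebra of degree `n = n₁n₂` with
`gcd(n₁,n₂) = 1` and `D'` is a central division algebra of degree `n` with the same maximal
subfields as `D`, then `D' ≅ D'₁ ⊗ D'₂` where `D'ᵢ` is a central division algebra of degree
`nᵢ` with the same maximal subfields as `Dᵢ`. -/
theorem genus_primary_decomposition (K : Type) [Field K] (n₁ n₂ : ℕ)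
    (hn₁ : 0 < n₁) (hn₂ : 0 < n₂) (hcop : Nat.Coprime n₁ n₂)
    (D D₁ D₂ D' : Type)
    [DivisionRing D] [Algebra K D] [DivisionRing D₁] [Algebra K D₁]
    [DivisionRing D₂] [Algebra K D₂] [DivisionRing D'] [Algebra K D']
    (hDc : Subalgebra.center K D = ⊥) (hD₁c : Subalgebra.center K D₁ = ⊥)
    (hD₂c : Subalgebra.center K D₂ = ⊥) (hD'c : Subalgebra.center K D' = ⊥)
    (hDdeg : Module.finrank K D = (n₁ * n₂) ^ 2)
    (hD₁deg : Module.finrank K D₁ = n₁ ^ 2)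
    (hD₂deg : Module.finrank K D₂ = n₂ ^ 2)
    (hD'deg : Module.finrank K D' = (n₁ * n₂) ^ 2)
    (hD : Nonempty (D ≃ₐ[K] (D₁ ⊗[K] D₂)))
    (hsame : SameMaxSubfields K (n₁ * n₂) D D') :
    ∃ (A₁ : Subalgebra K (Matrix (Fin (n₁ ^ 2)) (Fin (n₁ ^ 2)) K))
      (A₂ : Subalgebra K (Matrix (Fin (n₂ ^ 2)) (Fin (n₂ ^ 2)) K)),
      IsDivisionSubalgebra A₁ ∧ IsDivisionSubalgebra A₂ ∧
      Subalgebra.center K ↥A₁ = ⊥ ∧ Subalgebra.center K ↥A₂ = ⊥ ∧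
      Module.finrank K ↥A₁ = n₁ ^ 2 ∧ Module.finrank K ↥A₂ = n₂ ^ 2 ∧
      SameMaxSubfields K n₁ ↥A₁ D₁ ∧ SameMaxSubfields K n₂ ↥A₂ D₂ ∧
      Nonempty (D' ≃ₐ[K] (↥A₁ ⊗[K] ↥A₂)) := by
  have : Algebra.IsCentral K D := ⟨le_of_eq hDc⟩
  have : Algebra.IsCentral K D₁ := ⟨le_of_eq hD₁c⟩
  have : Algebra.IsCentral K D₂ := ⟨le_of_eq hD₂c⟩
  have : Algebra.IsCentral K D' := ⟨le_of_eq hD'c⟩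
  have : FiniteDimensional K D := Module.finite_of_finrank_pos (by rw [hDdeg]; positivity)
  have : FiniteDimensional K D₁ := Module.finite_of_finrank_pos (by rw [hD₁deg]; positivity)
  have : FiniteDimensional K D₂ := Module.finite_of_finrank_pos (by rw [hD₂deg]; positivity)
  have : FiniteDimensional K D' := Module.finite_of_finrank_pos (by rw [hD'deg]; positivity)
  obtain ⟨e⟩ := hD
  obtain ⟨P, _, _, hP, ⟨f⟩⟩ := GPD.exists_max_subfield hD₁deg
  obtain ⟨Q, _, _, hQ, ⟨g⟩⟩ := GPD.exists_max_subfield hD₂deg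
  have : FiniteDimensional K P := Module.finite_of_finrank_pos (by omega)
  have : FiniteDimensional K Q := Module.finite_of_finrank_pos (by omega)
  obtain ⟨F, _, _, hF, ⟨i⟩, ⟨j⟩, hFX⟩ := GPD.field_tensor e f g
  obtain ⟨k⟩ := (hsame F (by rw [hF, hP, hQ])).1 hFX
  obtain ⟨A, _, _, _, _, B, _, _, _, _, hA, hB, ⟨e'⟩⟩ :=
    GPD.decomp hn₁ hn₂ hcop hD'deg hP hQ (k.comp i) (k.comp j)
  have sA : SameMaxSubfields K n₁ A D₁ := fun R _ _ hR =>
    ⟨GPD.same_one hn₁ hn₂ hcop hB hD₁deg hD₂deg e' e (fun T _ _ hT => (hsame T hT).2) R hR,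
     GPD.same_one hn₁ hn₂ hcop hD₂deg hA hB e e' (fun T _ _ hT => (hsame T hT).1) R hR⟩
  have ec := e.trans (Algebra.TensorProduct.comm K D₁ D₂)
  have ec' := e'.trans (Algebra.TensorProduct.comm K A B)
  have sB : SameMaxSubfields K n₂ B D₂ := fun R _ _ hR =>
    ⟨GPD.same_one hn₂ hn₁ hcop.symm hA hD₂deg hD₁deg ec' ec
      (fun T _ _ hT => (hsame T (hT.trans (mul_comm _ _))).2) R hR,
     GPD.same_one hn₂ hn₁ hcop.symm hD₁deg hB hA ec ec'
      (fun T _ _ hT => (hsame T (hT.trans (mul_comm _ _))).1) R hR⟩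
  obtain ⟨S₁, d₁, c₁, ⟨f₁⟩⟩ := GPD.transport hA
  obtain ⟨S₂, d₂, c₂, ⟨f₂⟩⟩ := GPD.transport hB
  exact ⟨S₁, S₂, d₁, d₂, c₁, c₂, by rw [← f₁.toLinearEquiv.finrank_eq, hA],
    by rw [← f₂.toLinearEquiv.finrank_eq, hB], GPD.same_of f₁ sA, GPD.same_of f₂ sB,
    ⟨e'.trans (Algebra.TensorProduct.congr f₁ f₂)⟩⟩
end

section
/- Let R be a noetherian integrally closed domain with fraction field K, P the set of height-one primes of R, and M an R-lattice in W = K^n. Then: (1) for any other R-lattice N ⊆ W, N_𝔭 = M_𝔭 for all but finitely many 𝔭 ∈ P; (2) given R_𝔭-lattices N(𝔭) ⊆ W for 𝔭 ∈ P with N(𝔭) = M_𝔭 for almost all 𝔭, the intersection N = ∩_{𝔭∈P} N(𝔭) is a reflexive R-lattice with N_𝔭 = N(𝔭) for all 𝔭 ∈ P. -/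
section

variable {R K : Type} [CommRing R] [IsDomain R] [Field K] [Algebra R K] [IsFractionRing R K]
  (n : ℕ)

/-- The set of height-one primes of `R` (minimal nonzero primes). -/
def HtOnePrime (R : Type) [CommRing R] : Type :=
  {p : Ideal R // p.IsPrime ∧ p ≠ ⊥ ∧ ∀ q : Ideal R, q.IsPrime → q < p → q = ⊥}

/-- The localization `R_𝔭 · M ⊆ W` of a subset `M` of `W = K^n` at a height-one prime. -/
def LocAt (p : HtOnePrime R) (M : Set (Fin n → K)) : Set (Fin n → K) :=
  {x | ∃ s : R, s ∉ p.1 ∧ s • x ∈ M}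

/-- An `R`-lattice in `W = K^n`: a finitely generated `R`-submodule containing a `K`-basis. -/
def IsLattice (M : Submodule R (Fin n → K)) : Prop :=
  M.FG ∧ Submodule.span K (M : Set (Fin n → K)) = ⊤

/-- An `R_𝔭`-lattice in `W = K^n`: the localization at `𝔭` of some `R`-lattice. -/
def IsLocLattice (p : HtOnePrime R) (N : Set (Fin n → K)) : Prop :=
  ∃ M : Submodule R (Fin n → K), IsLattice n M ∧ N = LocAt n p (M : Set (Fin n → K))

end


set_option linter.unusedSectionVars false

section helpers

variable {R K : Type} [CommRing R] [IsDomain R] [Field K] [Algebra R K] [IsFractionRing R K]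

/-- Elements with a given nonzero `a` lie in only finitely many height-one primes. -/
lemma htOne_finite_of_mem [IsNoetherianRing R] (a : R) (ha : a ≠ 0) :
    {p : HtOnePrime R | a ∈ p.1}.Finite := by
  refine Set.Finite.of_finite_image (f := fun p : HtOnePrime R => p.1) ?_
    (fun p _ q _ h => Subtype.ext h)
  refine (Ideal.finite_minimalPrimes_of_isNoetherianRing R (Ideal.span {a})).subset ?_
  rintro _ ⟨p, hp, rfl⟩
  refine ⟨⟨p.2.1, ?_⟩, ?_⟩
  · simpa [Ideal.span_le] using hp
  · rintro q ⟨hq, hq2⟩ hqp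
    by_contra hne
    have hlt : q < p.1 := lt_of_le_not_ge hqp hne
    have := p.2.2.2 q hq hlt
    subst this
    apply ha
    simpa [Ideal.span_le] using hq2

/-- The ideal of denominators of `y`. -/
def denIdeal (R : Type) {K : Type} [CommRing R] [Field K] [Algebra R K] (y : K) : Ideal R :=
  (LinearMap.range (Algebra.linearMap R K)).comap (LinearMap.toSpanSingleton R K y)

lemma mem_denIdeal (y : K) (s : R) : s ∈ denIdeal R y ↔ ∃ r : R, algebraMap R K r = s • y := by
  simp [denIdeal]

lemma exists_den (y : K) : ∃ s : R, s ≠ 0 ∧ ∃ r : R, algebraMap R K r = s • y := by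
  obtain ⟨⟨r, s⟩, h⟩ := IsLocalization.surj (nonZeroDivisors R) y
  refine ⟨s, nonZeroDivisors.coe_ne_zero s, r, ?_⟩
  rw [← h, Algebra.smul_def, mul_comm]

lemma denIdeal_htOne [IsNoetherianRing R] [IsIntegrallyClosed R] (y : K)
    (hy : ¬ ∃ r : R, algebraMap R K r = y) (hp : (denIdeal R y).IsPrime) :
    denIdeal R y ≠ ⊥ ∧ ∀ q : Ideal R, q.IsPrime → q < denIdeal R y → q = ⊥ := by
  have inj := IsFractionRing.injective R K
  have hbot : denIdeal R y ≠ ⊥ := by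
    intro h
    obtain ⟨s, hs, hr⟩ := exists_den (R := R) y
    have := (mem_denIdeal y s).2 hr
    rw [h] at this
    exact hs this
  refine ⟨hbot, ?_⟩
  -- find t with t y a unit at p
  have key : ∃ t ∈ denIdeal R y, ∃ u : R, u ∉ denIdeal R y ∧ algebraMap R K u = t • y := by
    by_contra! hcon
    apply hy
    have hint : IsIntegral R y := by
      refine isIntegral_of_smul_mem_submodule (M := K)
        (Submodule.map (Algebra.linearMap R K) (denIdeal R y)) ?_ ?_ y ?_
      · intro h
        apply hbot
        rw [eq_bot_iff]
        intro z hz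
        have h1 := Submodule.mem_map_of_mem (f := Algebra.linearMap R K) hz
        rw [h] at h1
        simpa using h1
      · exact (IsNoetherian.noetherian (denIdeal R y)).map _
      · rintro _ ⟨t, ht, rfl⟩
        obtain ⟨u, hu⟩ := (mem_denIdeal y t).1 ht
        refine ⟨u, ?_, ?_⟩
        · by_contra hu'
          exact hcon t ht u hu' hu
        · simp only [Algebra.linearMap_apply, smul_eq_mul]
          rw [hu, Algebra.smul_def, mul_comm]
    exact IsIntegrallyClosed.isIntegral_iff.1 hint
  obtain ⟨t, ht, u, hu, htu⟩ := key
  have hmin : denIdeal R y ∈ (Ideal.span {t}).minimalPrimes := by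
    refine ⟨⟨hp, by simpa [Ideal.span_le] using ht⟩, ?_⟩
    rintro q ⟨hq, htq⟩ hqp z hz
    obtain ⟨v, hv⟩ := (mem_denIdeal y z).1 hz
    have h1 : u * z = v * t := by
      apply inj
      rw [map_mul, map_mul, htu, hv, Algebra.smul_def, Algebra.smul_def]
      ring
    have h2 : u * z ∈ q := by
      rw [h1]
      exact q.mul_mem_left _ (htq (Ideal.mem_span_singleton_self t))
    rcases hq.mem_or_mem h2 with h | h
    · exact absurd (hqp h) hu
    · exact h
  have hht := Ideal.height_le_one_of_isPrincipal_of_mem_minimalPrimes _ _ hmin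
  intro q hq hlt
  have h3 := Ideal.height_add_one_le_of_lt_of_isPrime hlt
  rw [← Ideal.height_eq_zero_iff_eq_bot]
  have h4 : q.height + 1 ≤ 1 := h3.trans hht
  have h5 : q.height + 1 ≤ 0 + 1 := by simpa using h4
  have := (ENat.add_le_add_iff_right (by simp)).1 h5
  simpa using this

/-- `R` is the intersection of its localizations at height-one primes. -/
lemma mem_of_forall_loc [IsNoetherianRing R] [IsIntegrallyClosed R] (x : K)
    (hx : ∀ p : HtOnePrime R, ∃ s : R, s ∉ p.1 ∧ ∃ r : R, algebraMap R K r = s • x) :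
    ∃ r : R, algebraMap R K r = x := by
  by_contra hcon
  obtain ⟨I, ⟨y, hy, hxy, rfl⟩, hmax⟩ := set_has_maximal_iff_noetherian.mpr
    (inferInstance : IsNoetherian R R)
    {I : Ideal R | ∃ y : K, (¬ ∃ r : R, algebraMap R K r = y) ∧ denIdeal R x ≤ denIdeal R y ∧
      denIdeal R y = I} ⟨_, x, hcon, le_rfl, rfl⟩
  have hprime : (denIdeal R y).IsPrime := by
    refine ⟨?_, ?_⟩
    · rw [Ideal.ne_top_iff_one, mem_denIdeal, one_smul]
      exact hy
    · intro s t hst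
      by_contra! h
      obtain ⟨hs, ht⟩ := h
      have hle : denIdeal R y ≤ denIdeal R (s • y) := by
        intro z hz
        obtain ⟨r, hr⟩ := (mem_denIdeal y z).1 hz
        refine (mem_denIdeal _ z).2 ⟨s * r, ?_⟩
        rw [map_mul, hr, smul_comm, ← Algebra.smul_def]
      refine hmax (denIdeal R (s • y)) ⟨s • y, ?_, hxy.trans hle, rfl⟩
        (lt_of_le_not_ge hle fun h => ht (h ?_))
      · rwa [mem_denIdeal] at hs
      · rw [mem_denIdeal] at hst ⊢
        rwa [smul_smul, mul_comm]
  obtain ⟨h1, h2⟩ := denIdeal_htOne y hy hprime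
  obtain ⟨s, hs, hr⟩ := hx ⟨denIdeal R y, hprime, h1, h2⟩
  exact hs (hxy ((mem_denIdeal x s).2 hr))

/-- Distinct height-one primes are independent. -/
lemma exists_indep (p q : HtOnePrime R) (hpq : q ≠ p) (a : R) (ha : a ≠ 0) :
    ∃ s : R, s ∉ p.1 ∧ ∃ u : R, u ∉ q.1 ∧ a ∣ u * s := by
  have hpp := p.2.1
  have hqp := q.2.1
  have hle : ¬ q.1 ≤ p.1 := by
    intro h
    rcases h.lt_or_eq with h | h
    · exact q.2.2.1 (p.2.2.2 _ hqp h)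
    · exact hpq (Subtype.ext h)
  obtain ⟨t, htq, htp⟩ := SetLike.not_le_iff_exists.1 hle
  by_contra! hcon
  have hdis : Disjoint ((Ideal.span {a} : Ideal R) : Set R)
      (q.1.primeCompl ⊔ Submonoid.powers t : Submonoid R) := by
    rw [Set.disjoint_left]
    intro z hz hz2
    obtain ⟨u, hu, w, ⟨k, rfl⟩, rfl⟩ := Submonoid.mem_sup.1 hz2
    exact hcon (t ^ k) (fun h => htp (hpp.mem_of_pow_mem k h)) u hu
      (Ideal.mem_span_singleton.1 hz)
  obtain ⟨q', hq', haq, hd⟩ := Ideal.exists_le_prime_disjoint _ _ hdis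
  rw [Set.disjoint_left] at hd
  have hq'q : q' < q.1 := by
    refine lt_of_le_not_ge ?_ fun h => ?_
    · intro z hz
      by_contra hzq
      exact hd hz (Submonoid.mem_sup_left hzq)
    · exact hd (h htq) (Submonoid.mem_sup_right (Submonoid.mem_powers t))
  have := q.2.2.2 q' hq' hq'q
  subst this
  exact ha (by simpa [Ideal.span_le] using haq)

/-- Every vector has a nonzero multiple in a spanning submodule. -/
lemma exists_smul_mem {n : ℕ} (N : Submodule R (Fin n → K))
    (hN : Submodule.span K (N : Set (Fin n → K)) = ⊤) (x : Fin n → K) :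
    ∃ a : R, a ≠ 0 ∧ a • x ∈ N := by
  have hx : x ∈ Submodule.span K (N : Set (Fin n → K)) := hN ▸ Submodule.mem_top
  induction hx using Submodule.span_induction with
  | mem x h => exact ⟨1, one_ne_zero, by simpa using h⟩
  | zero => exact ⟨1, one_ne_zero, by simp⟩
  | add x y _ _ hx hy =>
    obtain ⟨a, ha, hx⟩ := hx
    obtain ⟨b, hb, hy⟩ := hy
    refine ⟨a * b, mul_ne_zero ha hb, ?_⟩
    rw [smul_add]
    refine N.add_mem ?_ ?_
    · rw [mul_comm, mul_smul]
      exact N.smul_mem _ hx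
    · rw [mul_smul]
      exact N.smul_mem _ hy
  | smul k x _ hx =>
    obtain ⟨a, ha, hx⟩ := hx
    obtain ⟨s, hs, r, hr⟩ := exists_den (R := R) k
    refine ⟨s * a, mul_ne_zero hs ha, ?_⟩
    have : (s * a) • k • x = r • a • x := by
      rw [mul_smul, smul_comm a k x, ← smul_assoc, ← hr, algebraMap_smul]
    rw [this]
    exact N.smul_mem _ hx

lemma exists_smul_le {n : ℕ} (M N : Submodule R (Fin n → K)) (hM : M.FG)
    (hN : Submodule.span K (N : Set (Fin n → K)) = ⊤) :
    ∃ a : R, a ≠ 0 ∧ ∀ x ∈ M, a • x ∈ N := by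
  classical
  obtain ⟨S, rfl⟩ := hM
  choose f hf0 hf using exists_smul_mem N hN
  refine ⟨∏ x ∈ S, f x, Finset.prod_ne_zero_iff.2 fun x _ => hf0 x, fun x hx => ?_⟩
  have : Submodule.span R (S : Set (Fin n → K)) ≤
      N.comap (LinearMap.lsmul R (Fin n → K) (∏ x ∈ S, f x)) := by
    rw [Submodule.span_le]
    intro y hy
    change (∏ x ∈ S, f x) • y ∈ N
    rw [← Finset.prod_erase_mul S f hy, mul_smul]
    exact N.smul_mem _ (hf y)
  exact this hx

/-- The standard lattice. -/
def stdLat (R K : Type) [CommRing R] [Field K] [Algebra R K] (n : ℕ) :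
    Submodule R (Fin n → K) :=
  LinearMap.range ((Algebra.linearMap R K).compLeft (Fin n))

lemma mem_stdLat {n : ℕ} (x : Fin n → K) :
    x ∈ stdLat R K n ↔ ∀ i, ∃ r : R, algebraMap R K r = x i := by
  constructor
  · rintro ⟨y, rfl⟩ i
    exact ⟨y i, rfl⟩
  · intro h
    choose y hy using h
    exact ⟨y, funext hy⟩

lemma single_mem_stdLat {n : ℕ} (i : Fin n) : (Pi.single i 1 : Fin n → K) ∈ stdLat R K n := by
  rw [mem_stdLat]
  intro j
  by_cases h : j = i
  · subst h
    exact ⟨1, by simp⟩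
  · exact ⟨0, by simp [h]⟩

lemma isLattice_stdLat (n : ℕ) : IsLattice n (stdLat R K n) := by
  constructor
  · have : Module.Finite R (LinearMap.range ((Algebra.linearMap R K).compLeft (Fin n))) :=
      inferInstance
    exact Module.Finite.iff_fg.1 this
  · rw [eq_top_iff, ← (Pi.basisFun K (Fin n)).span_eq]
    apply Submodule.span_mono
    rintro _ ⟨i, rfl⟩
    rw [Pi.basisFun_apply]
    exact single_mem_stdLat i

end helpers

section helpers2

variable {R K : Type} [CommRing R] [IsDomain R] [Field K] [Algebra R K] [IsFractionRing R K]

/-- The localization of `R` at `p` inside `K`. -/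
noncomputable def locSub (K : Type) [Field K] [Algebra R K] [IsFractionRing R K]
    (p : Ideal R) [p.IsPrime] : Subalgebra R K :=
  Localization.subalgebra.ofField K p.primeCompl p.primeCompl_le_nonZeroDivisors

instance locSub_isLoc (p : Ideal R) [p.IsPrime] : IsLocalization.AtPrime (locSub K p) p :=
  Localization.subalgebra.isLocalization_ofField K p.primeCompl p.primeCompl_le_nonZeroDivisors

lemma mem_locSub (p : Ideal R) [p.IsPrime] (x : K) :
    x ∈ locSub K p ↔ ∃ s : R, s ∉ p ∧ ∃ r : R, algebraMap R K r = s • x := by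
  have h0 : ∀ s : R, s ∉ p → algebraMap R K s ≠ 0 := by
    intro s hs h
    rw [FaithfulSMul.algebraMap_eq_zero_iff] at h
    subst h
    exact hs p.zero_mem
  change (∃ (a s : R) (_ : s ∈ p.primeCompl), x = algebraMap R K a * (algebraMap R K s)⁻¹) ↔ _
  constructor
  · rintro ⟨a, s, hs, rfl⟩
    refine ⟨s, hs, a, ?_⟩
    have := h0 s hs
    rw [Algebra.smul_def]
    field_simp
  · rintro ⟨s, hs, r, hr⟩
    refine ⟨r, s, hs, ?_⟩
    have := h0 s hs
    rw [hr, Algebra.smul_def]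
    field_simp

lemma locSub_pid [IsNoetherianRing R] [IsIntegrallyClosed R] (p : HtOnePrime R)
    [hp : p.1.IsPrime] : IsPrincipalIdealRing (locSub K p.1) := by
  have : IsNoetherianRing (locSub K p.1) :=
    IsLocalization.isNoetherianRing p.1.primeCompl _ inferInstance
  have : IsLocalRing (locSub K p.1) := IsLocalization.AtPrime.isLocalRing _ p.1
  have : IsIntegrallyClosed (locSub K p.1) :=
    isIntegrallyClosed_of_isLocalization _ p.1.primeCompl p.1.primeCompl_le_nonZeroDivisors
  have htfae := (tfae_of_isNoetherianRing_of_isLocalRing_of_isDomain (locSub K p.1)).out 0 3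
  rw [htfae]
  refine ⟨this, fun P hP hPp => ?_⟩
  have hdis := (IsLocalization.isPrime_iff_isPrime_disjoint p.1.primeCompl _ P).1 hPp
  have hle : P.under R ≤ p.1 := by
    intro z hz
    by_contra hzp
    exact Set.disjoint_left.1 hdis.2 hzp hz
  have h1 := IsLocalization.map_under p.1.primeCompl (locSub K p.1) P
  have h2 := IsLocalization.map_under p.1.primeCompl (locSub K p.1)
    (IsLocalRing.maximalIdeal (locSub K p.1))
  rw [← h1, ← h2]
  congr 1
  have h3 : (IsLocalRing.maximalIdeal (locSub K p.1)).under R = p.1 :=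
    IsLocalization.AtPrime.under_maximalIdeal _ p.1
  refine Eq.trans ?_ h3.symm
  rcases hle.lt_or_eq with h | h
  · exfalso
    apply hP
    rw [← h1, p.2.2.2 _ hdis.1 h, Ideal.map_bot]
  · exact h

/-- Common denominators for a finitely generated module. -/
lemma exists_common_den {n : ℕ} (p : Ideal R) [hp : p.IsPrime] (N : Submodule R (Fin n → K))
    (hN : N.FG) (g : (Fin n → K) →ₗ[K] K) (hg : ∀ x ∈ N, g x ∈ locSub K p) :
    ∃ s : R, s ∉ p ∧ ∀ x ∈ N, ∃ r : R, algebraMap R K r = s • g x := by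
  classical
  obtain ⟨S, rfl⟩ := hN
  have h1 : ∀ x : Fin n → K, ∃ s : R, s ∉ p ∧
      (x ∈ S → ∃ r : R, algebraMap R K r = s • g x) := by
    intro x
    by_cases hx : x ∈ S
    · obtain ⟨s, hs, h⟩ := (mem_locSub p _).1 (hg x (Submodule.subset_span hx))
      exact ⟨s, hs, fun _ => h⟩
    · exact ⟨1, fun h => hp.ne_top ((Ideal.eq_top_iff_one _).2 h), fun h => absurd h hx⟩
  choose f hf hf2 using h1
  refine ⟨∏ x ∈ S, f x, fun h => ?_, fun x hx => ?_⟩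
  · obtain ⟨x, _, hx⟩ := hp.prod_mem_iff.1 h
    exact hf x hx
  · have : Submodule.span R (S : Set (Fin n → K)) ≤
        (LinearMap.range (Algebra.linearMap R K)).comap
          ((∏ x ∈ S, f x) • (g.restrictScalars R)) := by
      rw [Submodule.span_le]
      intro y hy
      obtain ⟨r, hr⟩ := hf2 y hy
      refine ⟨(∏ x ∈ S.erase y, f x) * r, ?_⟩
      simp only [Algebra.linearMap_apply, LinearMap.smul_apply, LinearMap.coe_restrictScalars]
      rw [← Finset.prod_erase_mul S f hy, mul_smul, map_mul, hr, Algebra.smul_def (∏ x ∈ S.erase y, f x)]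
    obtain ⟨r, hr⟩ := this hx
    exact ⟨r, hr⟩

lemma loc_of_mem_span {n : ℕ} (p : HtOnePrime R) [hp : p.1.IsPrime] (N : Submodule R (Fin n → K))
    (x : Fin n → K)
    (hx : x ∈ Submodule.span (locSub K p.1) (N : Set (Fin n → K))) :
    x ∈ LocAt n p (N : Set (Fin n → K)) := by
  have h1 : (1 : R) ∉ p.1 := fun h => hp.ne_top ((Ideal.eq_top_iff_one _).2 h)
  induction hx using Submodule.span_induction with
  | mem x h => exact ⟨1, h1, by simpa using h⟩
  | zero => exact ⟨1, h1, by simp⟩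
  | add x y _ _ hx hy =>
    obtain ⟨a, ha, hx⟩ := hx
    obtain ⟨b, hb, hy⟩ := hy
    refine ⟨a * b, fun h => (hp.mem_or_mem h).elim ha hb, ?_⟩
    rw [smul_add]
    refine N.add_mem ?_ ?_
    · rw [mul_comm, mul_smul]
      exact N.smul_mem _ hx
    · rw [mul_smul]
      exact N.smul_mem _ hy
  | smul k x _ hx =>
    obtain ⟨a, ha, hx⟩ := hx
    obtain ⟨s, hs, r, hr⟩ := (mem_locSub p.1 (k : K)).1 k.2
    refine ⟨s * a, fun h => (hp.mem_or_mem h).elim hs ha, ?_⟩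
    have : (s * a) • k • x = r • a • x := by
      change (s * a) • (k : K) • x = r • a • x
      rw [mul_smul, smul_comm a (k : K) x, ← smul_assoc, ← hr, algebraMap_smul]
    rw [this]
    exact N.smul_mem _ hx

/-- Over the DVR `R_p`, the localization of a lattice is cut out by its dual. -/
lemma dual_detect [IsNoetherianRing R] [IsIntegrallyClosed R] {n : ℕ} (p : HtOnePrime R)
    (N : Submodule R (Fin n → K)) (hN : IsLattice n N) (y : Fin n → K)
    (hy : ∀ g : (Fin n → K) →ₗ[K] K, (∀ x ∈ N, ∃ r : R, algebraMap R K r = g x) →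
      ∃ s : R, s ∉ p.1 ∧ ∃ r : R, algebraMap R K r = s • g y) :
    y ∈ LocAt n p (N : Set (Fin n → K)) := by
  classical
  have hp : p.1.IsPrime := p.2.1
  have hpid : IsPrincipalIdealRing (locSub K p.1) := locSub_pid p
  apply loc_of_mem_span
  set Np := Submodule.span (locSub K p.1) (N : Set (Fin n → K)) with hNp
  have hfin : Module.Finite (locSub K p.1) Np := by
    rw [Module.Finite.iff_fg]
    obtain ⟨S, hS⟩ := hN.1
    refine ⟨S, ?_⟩
    rw [hNp, ← hS, Submodule.span_span_of_tower]
  have hfree : Module.Free (locSub K p.1) Np := inferInstance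
  let b := Module.Free.chooseBasis (locSub K p.1) Np
  have hli : LinearIndependent K (fun j => (b j : Fin n → K)) := by
    rw [← LinearIndependent.iff_fractionRing (locSub K p.1) K]
    exact b.linearIndependent.map' Np.subtype (by simp)
  have hrep : ∀ x : Np, (x : Fin n → K) = ∑ j, ((b.repr x j : locSub K p.1) : K) • (b j : Fin n → K) := by
    intro x
    conv_lhs => rw [← b.sum_repr x]
    rw [Submodule.coe_sum]
    rfl
  have hsp : ⊤ ≤ Submodule.span K (Set.range (fun j => (b j : Fin n → K))) := by
    rw [← hN.2, Submodule.span_le]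
    intro x hx
    rw [SetLike.mem_coe]
    have := hrep ⟨x, Submodule.subset_span hx⟩
    simp only at this
    rw [this]
    exact Submodule.sum_mem _ fun j _ => Submodule.smul_mem _ _ (Submodule.subset_span ⟨j, rfl⟩)
  let B := Module.Basis.mk hli hsp
  have hB : ∀ j, B j = b j := fun j => Module.Basis.mk_apply hli hsp j
  have hco : ∀ j, B.coord j y ∈ locSub K p.1 := by
    intro j
    have h1 : ∀ x ∈ N, B.coord j x ∈ locSub K p.1 := by
      intro x hx
      have := hrep ⟨x, Submodule.subset_span hx⟩
      simp only [← hB] at this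
      rw [this, Module.Basis.coord_apply, Module.Basis.repr_sum_self]
      exact Subtype.coe_prop _
    obtain ⟨s, hs, h2⟩ := exists_common_den p.1 N hN.1 (B.coord j) h1
    obtain ⟨t, ht, r, hr⟩ := hy (algebraMap R K s • B.coord j) (by
      intro x hx
      obtain ⟨r, hr⟩ := h2 x hx
      exact ⟨r, by rw [hr, LinearMap.smul_apply, algebraMap_smul]⟩)
    rw [mem_locSub]
    refine ⟨t * s, fun h => (hp.mem_or_mem h).elim ht hs, r, ?_⟩
    rw [hr, LinearMap.smul_apply, algebraMap_smul, mul_smul]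
  rw [← B.sum_repr y]
  refine Submodule.sum_mem _ fun j _ => ?_
  rw [hB]
  exact Submodule.smul_mem Np (⟨_, hco j⟩ : locSub K p.1) (b j).2

/-- A lattice which is the intersection of its localizations is reflexive. -/
lemma reflexive_of_inter [IsNoetherianRing R] [IsIntegrallyClosed R] {n : ℕ}
    (N : Submodule R (Fin n → K)) (hN : IsLattice n N)
    (hint : ∀ x, (∀ p : HtOnePrime R, x ∈ LocAt n p (N : Set (Fin n → K))) → x ∈ N) :
    Module.IsReflexive R N := by
  classical
  have inj := IsFractionRing.injective R K
  obtain ⟨d, hd0, hd⟩ := exists_smul_le N (stdLat R K n) hN.1 (isLattice_stdLat n).2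
  obtain ⟨e, he0, he⟩ := exists_smul_le (stdLat R K n) N (isLattice_stdLat n).1 hN.2
  have hdK : algebraMap R K d ≠ 0 := by simpa using hd0
  have heK : algebraMap R K e ≠ 0 := by simpa using he0
  -- coordinate functionals
  have hc : ∀ i : Fin n, ∃ c : Module.Dual R N, ∀ x : N,
      algebraMap R K (c x) = algebraMap R K d * (x : Fin n → K) i := by
    intro i
    have h1 : ∀ x : N, ∃ r : R, algebraMap R K r = algebraMap R K d * (x : Fin n → K) i := by
      intro x
      obtain ⟨r, hr⟩ := (mem_stdLat _).1 (hd x x.2) i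
      exact ⟨r, by rw [hr, Pi.smul_apply, Algebra.smul_def]⟩
    choose c hc using h1
    refine ⟨{ toFun := c, map_add' := ?_, map_smul' := ?_ }, hc⟩
    · intro x y
      apply inj
      rw [map_add, hc, hc, hc, Submodule.coe_add, Pi.add_apply, mul_add]
    · intro r x
      apply inj
      rw [hc, RingHom.id_apply, smul_eq_mul, map_mul, hc, Submodule.coe_smul, Pi.smul_apply,
        Algebra.smul_def]
      ring
  choose c hc using hc
  let bb : Fin n → N := fun i => ⟨e • Pi.single i 1, he _ (single_mem_stdLat i)⟩
  -- the fundamental relation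
  have hrel : ∀ f : Module.Dual R N, (d * e) • f = ∑ i, f (bb i) • c i := by
    intro f
    ext x
    have h1 : (d * e) • x = ∑ i, c i x • bb i := by
      apply Subtype.ext
      rw [Submodule.coe_sum]
      funext j
      rw [Finset.sum_apply, Finset.sum_eq_single j]
      · simp only [Submodule.coe_smul, Pi.smul_apply, bb, Pi.single_eq_same]
        rw [Algebra.smul_def, Algebra.smul_def, Algebra.smul_def, hc, map_mul]
        ring
      · intro i _ hij
        simp [bb, Pi.single_eq_of_ne hij.symm]
      · simp
    have h2 := congrArg f h1
    rw [map_smul, map_sum] at h2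
    rw [LinearMap.smul_apply, h2, LinearMap.sum_apply]
    refine Finset.sum_congr rfl fun i _ => ?_
    rw [map_smul, LinearMap.smul_apply, smul_eq_mul, smul_eq_mul, mul_comm]
  refine ⟨⟨?_, ?_⟩⟩
  · rw [injective_iff_map_eq_zero]
    intro x hx
    apply Subtype.ext
    funext i
    have h1 : c i x = 0 := by
      have := LinearMap.congr_fun hx (c i)
      simpa using this
    have h2 := hc i x
    rw [h1, map_zero] at h2
    rcases mul_eq_zero.1 h2.symm with h | h
    · exact absurd h hdK
    · simpa using h
  · intro φ
    let w : Fin n → K := fun i => algebraMap R K (φ (c i)) / algebraMap R K d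
    have hφ : ∀ f : Module.Dual R N, algebraMap R K (d * e) * algebraMap R K (φ f) =
        ∑ i, algebraMap R K (f (bb i)) * algebraMap R K (φ (c i)) := by
      intro f
      have := congrArg φ (hrel f)
      rw [map_smul, map_sum] at this
      rw [← map_mul, ← smul_eq_mul, this, map_sum]
      refine Finset.sum_congr rfl fun i _ => ?_
      rw [map_smul, smul_eq_mul, map_mul]
    have hw : w ∈ N := by
      apply hint
      intro p
      apply dual_detect p N hN
      intro g hg
      have h1 : (1 : R) ∉ p.1 := fun h => p.2.1.ne_top ((Ideal.eq_top_iff_one _).2 h)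
      -- restrict g
      choose f hf using fun x : N => hg x x.2
      let F : Module.Dual R N :=
        { toFun := f
          map_add' := by
            intro x y
            apply inj
            rw [map_add, hf, hf, hf, Submodule.coe_add, map_add]
          map_smul' := by
            intro r x
            apply inj
            rw [hf, RingHom.id_apply, smul_eq_mul, map_mul, hf, Submodule.coe_smul,
              ← algebraMap_smul K r (x : Fin n → K), map_smul, smul_eq_mul] }
      refine ⟨1, h1, φ F, ?_⟩
      rw [one_smul]
      have hF : ∀ x : N, algebraMap R K (F x) = g x := hf
      have h2 : g w = ∑ i, w i * g (Pi.single i 1) := by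
        conv_lhs => rw [← (Pi.basisFun K (Fin n)).sum_repr w]
        rw [map_sum]
        refine Finset.sum_congr rfl fun i _ => ?_
        rw [map_smul]
        simp
      have h3 : ∀ i, algebraMap R K (F (bb i)) = algebraMap R K e * g (Pi.single i 1) := by
        intro i
        rw [hF]
        change g (e • Pi.single i 1) = _
        rw [← algebraMap_smul K e (Pi.single i 1 : Fin n → K), map_smul, smul_eq_mul]
      have h4 := hφ F
      have h5 : algebraMap R K (d * e) ≠ 0 := by
        rw [map_mul]
        exact mul_ne_zero hdK heK
      apply mul_left_cancel₀ h5
      rw [h4, h2, Finset.mul_sum]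
      refine Finset.sum_congr rfl fun i _ => ?_
      rw [h3, map_mul]
      simp only [w]
      field_simp
    refine ⟨⟨w, hw⟩, ?_⟩
    ext f
    rw [Module.Dual.eval_apply]
    have h1 : (d * e) • (f ⟨w, hw⟩) = (d * e) • φ f := by
      have h2 := LinearMap.congr_fun (hrel f) ⟨w, hw⟩
      rw [LinearMap.smul_apply] at h2
      rw [h2]
      apply inj
      rw [smul_eq_mul, map_mul, hφ, LinearMap.sum_apply, map_sum]
      refine Finset.sum_congr rfl fun i _ => ?_
      rw [LinearMap.smul_apply, smul_eq_mul, map_mul, hc]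
      simp only [w]
      field_simp
    exact mul_left_cancel₀ (mul_ne_zero hd0 he0) h1

end helpers2

/-- Theorem 6.3, Bourbaki: let `R` be a noetherian integrally closed domain
with fraction field `K`, `P` its set of height-one primes, and `M` an `R`-lattice in
`W = K^n`.  Then (1) for any other `R`-lattice `N ⊆ W`, `N_𝔭 = M_𝔭` for all but finitely many
`𝔭 ∈ P`; and (2) given `R_𝔭`-lattices `N(𝔭) ⊆ W` with `N(𝔭) = M_𝔭` for almost all `𝔭`, the
intersection `N = ∩_𝔭 N(𝔭)` is a reflexive `R`-lattice with `N_𝔭 = N(𝔭)` for all `𝔭`. -/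
theorem lattice_localizations (R K : Type) [CommRing R] [IsDomain R] [IsNoetherianRing R]
    [IsIntegrallyClosed R] [Field K] [Algebra R K] [IsFractionRing R K]
    (n : ℕ) (M : Submodule R (Fin n → K)) (hM : IsLattice n M) :
    (∀ N : Submodule R (Fin n → K), IsLattice n N →
      {p : HtOnePrime R |
        LocAt n p (N : Set (Fin n → K)) ≠ LocAt n p (M : Set (Fin n → K))}.Finite) ∧
    (∀ 𝒩 : HtOnePrime R → Set (Fin n → K),
      (∀ p, IsLocLattice n p (𝒩 p)) →
      {p : HtOnePrime R | 𝒩 p ≠ LocAt n p (M : Set (Fin n → K))}.Finite →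
      ∃ N : Submodule R (Fin n → K),
        (N : Set (Fin n → K)) = ⋂ p : HtOnePrime R, 𝒩 p ∧
        IsLattice n N ∧
        Module.IsReflexive R ↥N ∧
        ∀ p : HtOnePrime R, LocAt n p (N : Set (Fin n → K)) = 𝒩 p) := by
  classical
  have hone : ∀ p : HtOnePrime R, (1 : R) ∉ p.1 :=
    fun p h => p.2.1.ne_top ((Ideal.eq_top_iff_one _).2 h)
  have hnm : ∀ (p : HtOnePrime R) (a b : R), a ∉ p.1 → b ∉ p.1 → a * b ∉ p.1 :=
    fun p a b ha hb h => (p.2.1.mem_or_mem h).elim ha hb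
  constructor
  · intro N hN
    obtain ⟨a, ha0, ha⟩ := exists_smul_le N M hN.1 hM.2
    obtain ⟨b, hb0, hb⟩ := exists_smul_le M N hM.1 hN.2
    refine (htOne_finite_of_mem (a * b) (mul_ne_zero ha0 hb0)).subset ?_
    intro p hp
    by_contra hab
    have hap : a ∉ p.1 := fun h => hab (p.1.mul_mem_right _ h)
    have hbp : b ∉ p.1 := fun h => hab (p.1.mul_mem_left _ h)
    apply hp
    ext x
    constructor
    · rintro ⟨s, hs, hx⟩
      refine ⟨a * s, hnm p _ _ hap hs, ?_⟩
      rw [mul_smul]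
      exact ha _ hx
    · rintro ⟨s, hs, hx⟩
      refine ⟨b * s, hnm p _ _ hbp hs, ?_⟩
      rw [mul_smul]
      exact hb _ hx
  · intro 𝒩 h𝒩 hfin
    choose L hL hLeq using h𝒩
    -- closure properties of the local lattices
    have hzero : ∀ p, (0 : Fin n → K) ∈ 𝒩 p := by
      intro p
      rw [hLeq]
      exact ⟨1, hone p, by simp⟩
    have hadd : ∀ p x y, x ∈ 𝒩 p → y ∈ 𝒩 p → x + y ∈ 𝒩 p := by
      intro p x y hx hy
      rw [hLeq] at hx hy ⊢
      obtain ⟨s, hs, hx⟩ := hx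
      obtain ⟨t, ht, hy⟩ := hy
      refine ⟨s * t, hnm p _ _ hs ht, ?_⟩
      rw [smul_add]
      refine (L p).add_mem ?_ ?_
      · rw [mul_comm, mul_smul]
        exact (L p).smul_mem _ hx
      · rw [mul_smul]
        exact (L p).smul_mem _ hy
    have hsmul : ∀ p (r : R) x, x ∈ 𝒩 p → r • x ∈ 𝒩 p := by
      intro p r x hx
      rw [hLeq] at hx ⊢
      obtain ⟨s, hs, hx⟩ := hx
      refine ⟨s, hs, ?_⟩
      rw [smul_comm]
      exact (L p).smul_mem _ hx
    have hdiv : ∀ p (s : R) x, s ∉ p.1 → s • x ∈ 𝒩 p → x ∈ 𝒩 p := by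
      intro p s x hs hx
      rw [hLeq] at hx ⊢
      obtain ⟨t, ht, hx⟩ := hx
      refine ⟨t * s, hnm p _ _ ht hs, ?_⟩
      rw [mul_smul]
      exact hx
    -- uniform bounds by the standard lattice
    have hup : ∃ d : R, d ≠ 0 ∧ ∀ p, ∀ x ∈ 𝒩 p,
        d • x ∈ LocAt n p (stdLat R K n : Set (Fin n → K)) := by
      choose f hf0 hf using fun p => exists_smul_le (L p) (stdLat R K n) (hL p).1
        (isLattice_stdLat n).2
      obtain ⟨d, hd0, hd⟩ := exists_smul_le M (stdLat R K n) hM.1 (isLattice_stdLat n).2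
      refine ⟨d * ∏ p ∈ hfin.toFinset, f p,
        mul_ne_zero hd0 (Finset.prod_ne_zero_iff.2 fun p _ => hf0 p), ?_⟩
      intro p x hx
      by_cases hp : 𝒩 p = LocAt n p (M : Set (Fin n → K))
      · rw [hp] at hx
        obtain ⟨s, hs, hx⟩ := hx
        refine ⟨s, hs, ?_⟩
        rw [smul_comm, mul_comm, mul_smul]
        exact (stdLat R K n).smul_mem _ (hd _ hx)
      · have hmem : p ∈ hfin.toFinset := hfin.mem_toFinset.2 hp
        rw [hLeq] at hx
        obtain ⟨s, hs, hx⟩ := hx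
        refine ⟨s, hs, ?_⟩
        rw [smul_comm, ← Finset.prod_erase_mul _ f hmem, ← mul_assoc, mul_smul]
        exact (stdLat R K n).smul_mem _ (hf p _ hx)
    have hlow : ∃ e : R, e ≠ 0 ∧ ∀ p, ∀ x ∈ stdLat R K n, e • x ∈ 𝒩 p := by
      choose f hf0 hf using fun p => exists_smul_le (stdLat R K n) (L p)
        (isLattice_stdLat n).1 (hL p).2
      obtain ⟨d, hd0, hd⟩ := exists_smul_le (stdLat R K n) M (isLattice_stdLat n).1 hM.2
      refine ⟨d * ∏ p ∈ hfin.toFinset, f p,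
        mul_ne_zero hd0 (Finset.prod_ne_zero_iff.2 fun p _ => hf0 p), ?_⟩
      intro p x hx
      by_cases hp : 𝒩 p = LocAt n p (M : Set (Fin n → K))
      · rw [hp]
        refine ⟨1, hone p, ?_⟩
        rw [one_smul, mul_comm, mul_smul]
        exact M.smul_mem _ (hd _ hx)
      · have hmem : p ∈ hfin.toFinset := hfin.mem_toFinset.2 hp
        rw [hLeq]
        refine ⟨1, hone p, ?_⟩
        rw [one_smul, ← Finset.prod_erase_mul _ f hmem, ← mul_assoc, mul_smul]
        exact (L p).smul_mem _ (hf p _ hx)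
    obtain ⟨d, hd0, hd⟩ := hup
    obtain ⟨e, he0, he⟩ := hlow
    let N : Submodule R (Fin n → K) :=
      { carrier := ⋂ p : HtOnePrime R, 𝒩 p
        zero_mem' := Set.mem_iInter.2 hzero
        add_mem' := fun {x y} hx hy => Set.mem_iInter.2 fun p =>
          hadd p x y (Set.mem_iInter.1 hx p) (Set.mem_iInter.1 hy p)
        smul_mem' := fun r x hx => Set.mem_iInter.2 fun p =>
          hsmul p r x (Set.mem_iInter.1 hx p) }
    have hNmem : ∀ x, x ∈ N ↔ ∀ p, x ∈ 𝒩 p := fun x => Set.mem_iInter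
    have heN : ∀ x ∈ stdLat R K n, e • x ∈ N := fun x hx => (hNmem _).2 fun p => he p x hx
    have hdN : ∀ x ∈ N, d • x ∈ stdLat R K n := by
      intro x hx
      rw [mem_stdLat]
      intro i
      apply mem_of_forall_loc
      intro p
      obtain ⟨s, hs, h⟩ := hd p x ((hNmem x).1 hx p)
      obtain ⟨r, hr⟩ := (mem_stdLat _).1 h i
      exact ⟨s, hs, r, hr⟩
    have hlat : IsLattice n N := by
      constructor
      · have h1 : N.map (LinearMap.lsmul R (Fin n → K) d) ≤ stdLat R K n := by
          rintro _ ⟨x, hx, rfl⟩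
          exact hdN x hx
        have hnoeth : IsNoetherian R (stdLat R K n) :=
          isNoetherian_of_fg_of_noetherian _ (isLattice_stdLat n).1
        have h2 : (N.map (LinearMap.lsmul R (Fin n → K) d)).FG :=
          isNoetherian_submodule.1 hnoeth _ h1
        refine Submodule.fg_of_fg_map_injective (LinearMap.lsmul R (Fin n → K) d) ?_ h2
        intro x y hxy
        exact smul_right_injective _ hd0 hxy
      · rw [eq_top_iff, ← (Pi.basisFun K (Fin n)).span_eq, Submodule.span_le]
        rintro _ ⟨i, rfl⟩
        rw [Pi.basisFun_apply, SetLike.mem_coe]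
        have h1 := Submodule.subset_span (R := K) (heN _ (single_mem_stdLat i))
        have heK : algebraMap R K e ≠ 0 := by simpa using he0
        rw [← algebraMap_smul K e] at h1
        exact (Submodule.smul_mem_iff _ heK).1 h1
    have hloc : ∀ p : HtOnePrime R, LocAt n p (N : Set (Fin n → K)) = 𝒩 p := by
      intro p
      apply Set.Subset.antisymm
      · rintro x ⟨s, hs, hx⟩
        exact hdiv p s x hs ((hNmem _).1 hx p)
      · intro x hx
        obtain ⟨a, ha0, ha⟩ := exists_smul_mem N hlat.2 x
        have hT := htOne_finite_of_mem a ha0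
        have h1 : ∀ q : HtOnePrime R, ∃ s : R, s ∉ p.1 ∧ s • x ∈ 𝒩 q := by
          intro q
          by_cases hqp : q = p
          · subst hqp
            exact ⟨1, hone q, by simpa using hx⟩
          · obtain ⟨s, hs, u, hu, ⟨v, hv⟩⟩ := exists_indep p q hqp a ha0
            refine ⟨s, hs, hdiv q u _ hu ?_⟩
            rw [smul_smul, hv, mul_comm, mul_smul]
            exact hsmul q v _ ((hNmem _).1 ha q)
        choose f hf hfx using h1
        refine ⟨∏ q ∈ hT.toFinset, f q, fun h => ?_, (hNmem _).2 fun q => ?_⟩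
        · obtain ⟨q, _, hq⟩ := p.2.1.prod_mem_iff.1 h
          exact hf q hq
        · by_cases hq : a ∈ q.1
          · have hmem : q ∈ hT.toFinset := hT.mem_toFinset.2 hq
            rw [← Finset.prod_erase_mul _ f hmem, mul_smul]
            exact hsmul q _ _ (hfx q)
          · exact hsmul q _ _ (hdiv q a x hq ((hNmem _).1 ha q))
    refine ⟨N, rfl, hlat, ?_, hloc⟩
    apply reflexive_of_inter N hlat
    intro x hx
    rw [hNmem]
    intro p
    rw [← hloc p]
    exact hx p
end
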